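/- Let u : ℝ × ℝ → ℂ be a smooth function such that for every t ∈ ℝ the function x ↦ u(t,x) is a Schwartz function, and suppose u solves the defocusing nonlinear Schrödinger equation i∂ₜu(t,x) − ∂ₓ²u(t,x) + |u(t,x)|^{p−1}u(t,x) = 0 on ℝ × ℝ for some p > 1. Then there is an absolute constant C > 0 such that for every compact time interval I, ∫_I ∫_ℝ |u(t,x)|⁸ dx dt ≤ C · sup_{t ∈ I} ( ‖u(t,·)‖_{L²(ℝ)}⁷ · ‖∂ₓu(t,·)‖_{L²(ℝ)} ). -/

import Mathlib

open MeasureTheory Real Complex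

/-!
Write `u = a + ib` and `ρ = |u|²`. The local conservation laws are `ρₜ = ∂ₓ J` and `Jₜ = ∂ₓ Σ` with
`J = 2 Im(ū uₓ)` and `Σ = -ρₓₓ + 4|uₓ|² + 2c|u|^{p+1}`, `c = (p-1)/(p+1) ≥ 0`. Let
`m(t,x) = ∫_{-∞}^x ρ(t)` be the mass to the left of `x`, so that `mₓ = ρ` and `mₜ = J`. Then
`∂ₜ(J m) - ∂ₓ(Σ m + ρ ρₓ) = J² - 4ρ|uₓ|² - 2cρ|u|^{p+1} - ρₓ² = -2ρₓ² - 2cρ|u|^{p+1}`,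
because `4ρ|uₓ|² = J² + ρₓ²`. Since `0 ≤ m ≤ M = ‖u‖₂²` and `‖J‖₁ ≤ 2‖u‖₂‖uₓ‖₂`, integrating over
the strip bounds `∫∫ ρₓ²` by `‖u‖₂³ (‖uₓ(t₁)‖₂ + ‖uₓ(t₂)‖₂)`, and the Gagliardo–Nirenberg inequality
`‖ρ‖₄⁴ ≤ (9/4)‖ρ‖₁²‖ρₓ‖₂²` turns this into the bound for `∫∫ ρ⁴` (`Sol.morawetz`), with final
constant `9/2`.

Only the individual time slices are assumed to be Schwartz, with no uniformity in time, so the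
boundary terms at `x = ±∞` have to be controlled. `flux_facts` integrates `Gₜ - Hₓ` over a strip
when `H(t)` and `(Gₜ - Hₓ)(t)` are bounded in `L¹` uniformly in `t`: then `∫ H dt` and its
`x`-derivative are integrable, and the boundary terms vanish. These `L¹` bounds come from three
facts.

* While the `H¹` norm is bounded, `uₜ` is bounded in `L²` (`ut_bound`). This follows from `L²`
  stability (`l2_diff`) applied to `u` against `u(t₁)` and against time translates of `u`.
* While the `H¹` norm is bounded, mass and energy are therefore conserved, which improves the bound
  to one that depends only on the `H¹` norm at a single time (`Sol.Q_prop`).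
* The `H¹` norm is locally bounded (`Sol.loc_bdd`). Its sublevel sets are closed by Fatou's lemma,
  so Baire's theorem gives a bound on a relatively open piece of the closed set of bad times, and
  `Sol.Q_prop` carries that bound to the nearby good times.
-/

namespace Morawetz

open Set Filter Topology
open scoped ContDiff Interval

/-! ### Partial derivatives of smooth functions on the plane -/

/-- Joint smoothness of a curried function of time and space. -/
def Sm (f : ℝ → ℝ → ℝ) : Prop := ContDiff ℝ ∞ (fun q : ℝ × ℝ => f q.1 q.2)

/-- The partial derivative in the first (time) variable. -/
noncomputable def dt (f : ℝ → ℝ → ℝ) : ℝ → ℝ → ℝ := fun t x => deriv (fun s => f s x) t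

/-- The partial derivative in the second (space) variable. -/
noncomputable def dx (f : ℝ → ℝ → ℝ) : ℝ → ℝ → ℝ := fun t x => deriv (f t) x

lemma Sm.hasFDerivAt {f : ℝ → ℝ → ℝ} (hf : Sm f) (q : ℝ × ℝ) :
    HasFDerivAt (fun q : ℝ × ℝ => f q.1 q.2) (fderiv ℝ (fun q : ℝ × ℝ => f q.1 q.2) q) q :=
  (hf.differentiable (by simp) q).hasFDerivAt

lemma Sm.hasDerivAt_t_aux {f : ℝ → ℝ → ℝ} (hf : Sm f) (t x : ℝ) :
    HasDerivAt (fun s => f s x) (fderiv ℝ (fun q : ℝ × ℝ => f q.1 q.2) (t, x) (1, 0)) t := by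
  have h := (hf.hasFDerivAt (t, x)).comp_hasDerivAt t
    ((hasDerivAt_id t).prodMk (hasDerivAt_const t x))
  exact h

lemma Sm.hasDerivAt_x_aux {f : ℝ → ℝ → ℝ} (hf : Sm f) (t x : ℝ) :
    HasDerivAt (f t) (fderiv ℝ (fun q : ℝ × ℝ => f q.1 q.2) (t, x) (0, 1)) x := by
  have h := (hf.hasFDerivAt (t, x)).comp_hasDerivAt x
    ((hasDerivAt_const x t).prodMk (hasDerivAt_id x))
  exact h

lemma Sm.dt_eq {f : ℝ → ℝ → ℝ} (hf : Sm f) (t x : ℝ) :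
    dt f t x = fderiv ℝ (fun q : ℝ × ℝ => f q.1 q.2) (t, x) (1, 0) :=
  (hf.hasDerivAt_t_aux t x).deriv

lemma Sm.dx_eq {f : ℝ → ℝ → ℝ} (hf : Sm f) (t x : ℝ) :
    dx f t x = fderiv ℝ (fun q : ℝ × ℝ => f q.1 q.2) (t, x) (0, 1) :=
  (hf.hasDerivAt_x_aux t x).deriv

lemma Sm.hasDerivAt_t {f : ℝ → ℝ → ℝ} (hf : Sm f) (t x : ℝ) :
    HasDerivAt (fun s => f s x) (dt f t x) t := by
  rw [hf.dt_eq]; exact hf.hasDerivAt_t_aux t x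

lemma Sm.hasDerivAt_x {f : ℝ → ℝ → ℝ} (hf : Sm f) (t x : ℝ) :
    HasDerivAt (f t) (dx f t x) x := by
  rw [hf.dx_eq]; exact hf.hasDerivAt_x_aux t x

lemma Sm.fderiv_apply {f : ℝ → ℝ → ℝ} (hf : Sm f) (v : ℝ × ℝ) :
    ContDiff ℝ ∞ (fun q : ℝ × ℝ => fderiv ℝ (fun q : ℝ × ℝ => f q.1 q.2) q v) :=
  (ContDiff.fderiv_right (m := ∞) hf (by simp)).clm_apply contDiff_const

lemma Sm.dt {f : ℝ → ℝ → ℝ} (hf : Sm f) : Sm (dt f) := by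
  have h : (fun q : ℝ × ℝ => Morawetz.dt f q.1 q.2) =
      fun q : ℝ × ℝ => fderiv ℝ (fun q : ℝ × ℝ => f q.1 q.2) q (1, 0) := by
    ext q; exact hf.dt_eq q.1 q.2
  unfold Sm
  rw [h]; exact hf.fderiv_apply _

lemma Sm.dx {f : ℝ → ℝ → ℝ} (hf : Sm f) : Sm (dx f) := by
  have h : (fun q : ℝ × ℝ => Morawetz.dx f q.1 q.2) =
      fun q : ℝ × ℝ => fderiv ℝ (fun q : ℝ × ℝ => f q.1 q.2) q (0, 1) := by
    ext q; exact hf.dx_eq q.1 q.2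
  unfold Sm
  rw [h]; exact hf.fderiv_apply _

lemma Sm.comm {f : ℝ → ℝ → ℝ} (hf : Sm f) (t x : ℝ) :
    Morawetz.dt (Morawetz.dx f) t x = Morawetz.dx (Morawetz.dt f) t x := by
  have hd : DifferentiableAt ℝ (fderiv ℝ (fun q : ℝ × ℝ => f q.1 q.2)) (t, x) :=
    ((ContDiff.fderiv_right (m := ∞) hf (by simp)).differentiable (by simp)) _
  have key : ∀ v w : ℝ × ℝ,
      fderiv ℝ (fun q : ℝ × ℝ => fderiv ℝ (fun q : ℝ × ℝ => f q.1 q.2) q v) (t, x) w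
      = fderiv ℝ (fderiv ℝ (fun q : ℝ × ℝ => f q.1 q.2)) (t, x) w v := by
    intro v w
    rw [fderiv_clm_apply hd (differentiableAt_const v)]
    simp
  have h1 : (fun q : ℝ × ℝ => Morawetz.dt f q.1 q.2) =
      fun q : ℝ × ℝ => fderiv ℝ (fun q : ℝ × ℝ => f q.1 q.2) q (1, 0) := by
    ext q; exact hf.dt_eq q.1 q.2
  have h2 : (fun q : ℝ × ℝ => Morawetz.dx f q.1 q.2) =
      fun q : ℝ × ℝ => fderiv ℝ (fun q : ℝ × ℝ => f q.1 q.2) q (0, 1) := by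
    ext q; exact hf.dx_eq q.1 q.2
  rw [hf.dx.dt_eq, hf.dt.dx_eq, h1, h2, key, key]
  exact (hf.contDiffAt.isSymmSndFDerivAt (by
    simpa using (ENat.LEInfty.out : (2 : WithTop ℕ∞) ≤ ∞))).eq _ _

lemma Sm.cont {f : ℝ → ℝ → ℝ} (hf : Sm f) : Continuous (fun q : ℝ × ℝ => f q.1 q.2) :=
  ContDiff.continuous hf

/-! ### Divergence identities over strips -/

lemma cont_t {f : ℝ → ℝ → ℝ} (hf : Continuous (fun q : ℝ × ℝ => f q.1 q.2)) (x : ℝ) :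
    Continuous (fun s => f s x) :=
  hf.comp (by fun_prop : Continuous fun s : ℝ => (s, x))

lemma cont_x {f : ℝ → ℝ → ℝ} (hf : Continuous (fun q : ℝ × ℝ => f q.1 q.2)) (t : ℝ) :
    Continuous (f t) :=
  hf.comp (by fun_prop : Continuous fun s : ℝ => (t, s))

/-- Differentiation under an interval integral when the partial derivative is jointly continuous. -/
lemma hasDerivAt_param {H Hx : ℝ → ℝ → ℝ} (hH : ∀ t x, HasDerivAt (H t) (Hx t x) x)
    (hc : Continuous (fun q : ℝ × ℝ => H q.1 q.2))
    (hxc : Continuous (fun q : ℝ × ℝ => Hx q.1 q.2)) (t₁ t₂ x : ℝ) :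
    HasDerivAt (fun x => ∫ t in t₁..t₂, H t x) (∫ t in t₁..t₂, Hx t x) x := by
  have hxc' : Continuous (fun q : ℝ × ℝ => Hx q.2 q.1) := hxc.comp continuous_swap
  have h1 : ∀ x, ∫ t in t₁..t₂, H t x
      = (∫ t in t₁..t₂, H t 0) + ∫ y in (0:ℝ)..x, ∫ t in t₁..t₂, Hx t y := by
    intro x
    rw [← intervalIntegral_intervalIntegral_swap, ← intervalIntegral.integral_add]
    · refine intervalIntegral.integral_congr fun t _ => ?_
      have := intervalIntegral.integral_eq_sub_of_hasDerivAt (fun y _ => hH t y)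
        ((cont_x hxc t).intervalIntegrable 0 x)
      simp only [this]; ring
    · exact (cont_t hc 0).intervalIntegrable _ _
    · refine Continuous.intervalIntegrable ?_ _ _
      exact intervalIntegral.continuous_parametric_intervalIntegral_of_continuous' hxc 0 x
    · have : IntegrableOn (Function.uncurry Hx) ([[t₁, t₂]] ×ˢ [[0, x]]) :=
        ContinuousOn.integrableOn_compact (isCompact_uIcc.prod isCompact_uIcc)
          (Continuous.continuousOn hxc)
      exact this.mono_set (Set.prod_mono uIoc_subset_uIcc uIoc_subset_uIcc)
  have hcont : Continuous fun y => ∫ t in t₁..t₂, Hx t y :=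
    intervalIntegral.continuous_parametric_intervalIntegral_of_continuous' hxc' t₁ t₂
  have h2 := (hcont.integral_hasStrictDerivAt 0 x).hasDerivAt.const_add (∫ t in t₁..t₂, H t 0)
  exact h2.congr_of_eventuallyEq (Eventually.of_forall h1)

/-- A jointly continuous function whose space integrals are bounded on a time interval is integrable
on the strip. -/
lemma integrable_strip {B : ℝ → ℝ → ℝ} (hc : Continuous (fun q : ℝ × ℝ => B q.1 q.2))
    {t₁ t₂ A : ℝ} (hi : ∀ t ∈ Icc t₁ t₂, Integrable (B t))
    (hb : ∀ t ∈ Icc t₁ t₂, ∫ x, |B t x| ≤ A) :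
    Integrable (Function.uncurry B) ((volume.restrict (Ioc t₁ t₂)).prod volume) := by
  have hm : AEStronglyMeasurable (Function.uncurry B)
      ((volume.restrict (Ioc t₁ t₂)).prod volume) := Continuous.aestronglyMeasurable hc
  rw [integrable_prod_iff hm]
  constructor
  · filter_upwards [ae_restrict_mem measurableSet_Ioc] with t ht
    exact hi t (Ioc_subset_Icc_self ht)
  · refine Integrable.mono' (g := fun _ => A) (by simp) hm.norm.integral_prod_right' ?_
    filter_upwards [ae_restrict_mem measurableSet_Ioc] with t ht
    rw [Real.norm_of_nonneg (integral_nonneg fun _ => norm_nonneg _)]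
    exact hb t (Ioc_subset_Icc_self ht)

/-- The flux `∫ H dt` through a vertical line is an integrable function of the line, and so is its
derivative; hence no mass leaks through infinity. -/
lemma flux_facts {G H Gt Hx : ℝ → ℝ → ℝ}
    (hG : ∀ t x, HasDerivAt (fun s => G s x) (Gt t x) t)
    (hH : ∀ t x, HasDerivAt (H t) (Hx t x) x)
    (hHc : Continuous (fun q : ℝ × ℝ => H q.1 q.2))
    (hGtc : Continuous (fun q : ℝ × ℝ => Gt q.1 q.2))
    (hHxc : Continuous (fun q : ℝ × ℝ => Hx q.1 q.2))
    {t₁ t₂ A : ℝ} (h12 : t₁ ≤ t₂)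
    (hG1 : Integrable (G t₁)) (hG2 : Integrable (G t₂))
    (hHi : ∀ t ∈ Icc t₁ t₂, Integrable (H t)) (hHb : ∀ t ∈ Icc t₁ t₂, ∫ x, |H t x| ≤ A)
    (hBi : ∀ t ∈ Icc t₁ t₂, Integrable (fun x => Gt t x - Hx t x))
    (hBb : ∀ t ∈ Icc t₁ t₂, ∫ x, |Gt t x - Hx t x| ≤ A) :
    Integrable (fun x => ∫ t in t₁..t₂, H t x) ∧
    Integrable (fun x => ∫ t in t₁..t₂, Hx t x) ∧
    IntervalIntegrable (fun t => ∫ x, (Gt t x - Hx t x)) volume t₁ t₂ ∧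
    (∫ x, G t₂ x) - ∫ x, G t₁ x = ∫ t in t₁..t₂, ∫ x, (Gt t x - Hx t x) := by
  have hBc : Continuous (fun q : ℝ × ℝ => Gt q.1 q.2 - Hx q.1 q.2) := hGtc.sub hHxc
  have iH := integrable_strip hHc hHi hHb
  have iB := integrable_strip (B := fun t x => Gt t x - Hx t x) hBc hBi hBb
  have jH : Integrable (fun x => ∫ t in t₁..t₂, H t x) := by
    simp_rw [intervalIntegral.integral_of_le h12]
    exact iH.integral_prod_right
  have jB : Integrable (fun x => ∫ t in t₁..t₂, (Gt t x - Hx t x)) := by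
    simp_rw [intervalIntegral.integral_of_le h12]
    exact iB.integral_prod_right
  have e : ∀ x, ∫ t in t₁..t₂, Hx t x
      = G t₂ x - G t₁ x - ∫ t in t₁..t₂, (Gt t x - Hx t x) := by
    intro x
    rw [intervalIntegral.integral_sub ((cont_t hGtc x).intervalIntegrable _ _)
      ((cont_t hHxc x).intervalIntegrable _ _),
      intervalIntegral.integral_eq_sub_of_hasDerivAt (fun t _ => hG t x)
      ((cont_t hGtc x).intervalIntegrable _ _)]
    ring
  have jHx : Integrable (fun x => ∫ t in t₁..t₂, Hx t x) := by
    simp_rw [e]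
    exact (hG2.sub hG1).sub jB
  refine ⟨jH, jHx, (intervalIntegrable_iff_integrableOn_Ioc_of_le h12).2 iB.integral_prod_left, ?_⟩
  have z := integral_eq_zero_of_hasDerivAt_of_integrable
    (fun x => hasDerivAt_param hH hHc hHxc t₁ t₂ x) jHx jH
  simp_rw [e] at z
  have hG21 : Integrable (fun x => G t₂ x - G t₁ x) := hG2.sub hG1
  rw [integral_sub hG21 jB, integral_sub hG2 hG1] at z
  rw [intervalIntegral_integral_swap]
  · linarith
  · rw [uIoc_of_le h12]; exact iB


/-! ### One-variable inequalities -/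

lemma abs_le_integral_deriv {f f' : ℝ → ℝ} (hd : ∀ x, HasDerivAt f (f' x) x)
    (hf : Integrable f) (hf' : Integrable f') (x : ℝ) : |f x| ≤ ∫ y, |f' y| := by
  have h0 : Tendsto f atBot (𝓝 0) :=
    tendsto_zero_of_hasDerivAt_of_integrableOn_Iic (a := 0) (fun x _ => hd x)
      hf'.integrableOn hf.integrableOn
  have h1 : ∫ y in Iic x, f' y = f x - 0 :=
    integral_Iic_of_hasDerivAt_of_tendsto' (fun x _ => hd x) hf'.integrableOn h0
  rw [sub_zero] at h1
  rw [← h1]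
  calc |∫ y in Iic x, f' y| ≤ ∫ y in Iic x, |f' y| := abs_integral_le_integral_abs
    _ ≤ ∫ y, |f' y| := setIntegral_le_integral hf'.abs (Eventually.of_forall fun _ => abs_nonneg _)

/-- Fatou's lemma for real integrals. -/
lemma fatou_real {F : ℕ → ℝ → ℝ} {f : ℝ → ℝ} {A : ℝ} (hF : ∀ k, Integrable (F k))
    (hF0 : ∀ k x, 0 ≤ F k x) (hlim : ∀ x, Tendsto (fun k => F k x) atTop (𝓝 (f x)))
    (hA : ∀ k, ∫ x, F k x ≤ A) : Integrable f ∧ ∫ x, f x ≤ A := by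
  have hf0 : ∀ x, 0 ≤ f x := fun x => ge_of_tendsto' (hlim x) fun k => hF0 k x
  have hm : AEStronglyMeasurable f volume :=
    aestronglyMeasurable_of_tendsto_ae atTop (fun k => (hF k).1) (Eventually.of_forall hlim)
  have hA0 : 0 ≤ A := (integral_nonneg (hF0 0)).trans (hA 0)
  have hl : ∫⁻ x, ENNReal.ofReal (f x) ≤ ENNReal.ofReal A := by
    have e : ∀ x, ENNReal.ofReal (f x) = liminf (fun k => ENNReal.ofReal (F k x)) atTop :=
      fun x => ((ENNReal.continuous_ofReal.tendsto _).comp (hlim x)).liminf_eq.symm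
    simp_rw [e]
    refine (lintegral_liminf_le' fun k => (hF k).1.aemeasurable.ennreal_ofReal).trans ?_
    refine liminf_le_of_le (by isBoundedDefault) fun b hb => ?_
    obtain ⟨k, hk⟩ := hb.exists
    refine hk.trans ?_
    rw [← ofReal_integral_eq_lintegral_ofReal (hF k) (Eventually.of_forall (hF0 k))]
    exact ENNReal.ofReal_le_ofReal (hA k)
  have hi : Integrable f := by
    refine ⟨hm, ?_⟩
    rw [hasFiniteIntegral_iff_ofReal (Eventually.of_forall hf0)]
    exact hl.trans_lt ENNReal.ofReal_lt_top
  refine ⟨hi, ?_⟩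
  rw [← ofReal_integral_eq_lintegral_ofReal hi (Eventually.of_forall hf0)] at hl
  exact (ENNReal.ofReal_le_ofReal_iff hA0).1 hl

lemma cauchy_schwarz {f g : ℝ → ℝ} (hf : MemLp f 2) (hg : MemLp g 2) :
    ∫ x, |f x * g x| ≤ (∫ x, f x ^ 2) ^ ((1:ℝ)/2) * (∫ x, g x ^ 2) ^ ((1:ℝ)/2) := by
  have h := integral_mul_norm_le_Lp_mul_Lq (μ := volume) (f := f) (g := g)
    (p := 2) (q := 2) (by constructor <;> norm_num) (by simpa using hf) (by simpa using hg)
  simpa [abs_mul] using h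

/-- The Gagliardo–Nirenberg inequality `‖ρ‖₄⁴ ≤ (9/4) ‖ρ‖₁² ‖ρₓ‖₂²` for nonnegative `ρ`. It follows
from the fundamental theorem of calculus for `ρ ^ (3/2)`, whose derivative is
`(3/2) ρ ^ (1/2) ρₓ`. -/
lemma gagliardo_nirenberg {ρ r : ℝ → ℝ} {A : ℝ} (h0 : ∀ x, 0 ≤ ρ x) (hA : ∀ x, ρ x ≤ A)
    (hd : ∀ x, HasDerivAt ρ (r x) x) (hρ : Integrable ρ) (hr : MemLp r 2) :
    ∫ x, ρ x ^ 4 ≤ 9 / 4 * (∫ x, ρ x) ^ 2 * ∫ x, r x ^ 2 := by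
  have hρc : Continuous ρ := continuous_iff_continuousAt.2 fun x => (hd x).continuousAt
  have hsc : Continuous fun x => ρ x ^ ((1:ℝ)/2) :=
    hρc.rpow_const fun x => Or.inr (by norm_num)
  have hsq : ∀ x, (ρ x ^ ((1:ℝ)/2)) ^ 2 = ρ x := fun x => by
    rw [← Real.rpow_natCast, ← Real.rpow_mul (h0 x)]; norm_num
  have hs : MemLp (fun x => ρ x ^ ((1:ℝ)/2)) 2 := by
    rw [memLp_two_iff_integrable_sq hsc.aestronglyMeasurable]
    simpa only [hsq] using hρ
  have hfd : ∀ x, HasDerivAt (fun x => ρ x ^ ((3:ℝ)/2)) (3 / 2 * (ρ x ^ ((1:ℝ)/2) * r x)) x := by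
    intro x
    have := (hd x).rpow_const (p := (3:ℝ)/2) (Or.inr (by norm_num))
    convert this using 1
    norm_num; ring
  have hfe : ∀ x, ρ x ^ ((3:ℝ)/2) = ρ x ^ ((1:ℝ)/2) * ρ x := fun x => by
    have h32 : (3:ℝ)/2 = 1/2 + 1 := by norm_num
    rw [h32, Real.rpow_add' (h0 x) (by norm_num), Real.rpow_one]
  have hfi : Integrable (fun x => ρ x ^ ((3:ℝ)/2)) := by
    simp_rw [hfe]
    refine hρ.bdd_mul (c := A ^ ((1:ℝ)/2)) hsc.aestronglyMeasurable
      (Eventually.of_forall fun x => ?_)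
    rw [Real.norm_of_nonneg (Real.rpow_nonneg (h0 x) _)]
    exact Real.rpow_le_rpow (h0 x) (hA x) (by norm_num)
  have hfi' : Integrable (fun x => 3 / 2 * (ρ x ^ ((1:ℝ)/2) * r x)) :=
    (hs.integrable_mul hr).const_mul _
  set M := ∫ x, ρ x
  set D := ∫ x, r x ^ 2
  have hM : 0 ≤ M := integral_nonneg h0
  have hD : 0 ≤ D := integral_nonneg fun x => sq_nonneg _
  have hpt : ∀ x, ρ x ^ 3 ≤ 9 / 4 * M * D := by
    intro x
    have h1 := abs_le_integral_deriv hfd hfi hfi' x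
    have h2 := cauchy_schwarz hs hr
    simp_rw [hsq] at h2
    have h3 : ∫ y, |3 / 2 * (ρ y ^ ((1:ℝ)/2) * r y)|
        = 3 / 2 * ∫ y, |ρ y ^ ((1:ℝ)/2) * r y| := by
      rw [← integral_const_mul]; congr 1; ext y; rw [abs_mul]; norm_num
    rw [h3] at h1
    have h4 : |ρ x ^ ((3:ℝ)/2)| ≤ 3 / 2 * (M ^ ((1:ℝ)/2) * D ^ ((1:ℝ)/2)) :=
      h1.trans (mul_le_mul_of_nonneg_left h2 (by norm_num))
    have h5 := pow_le_pow_left₀ (abs_nonneg _) h4 2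
    have e1 : (M ^ ((1:ℝ)/2)) ^ 2 = M := by
      rw [← Real.rpow_natCast, ← Real.rpow_mul hM]; norm_num
    have e2 : (D ^ ((1:ℝ)/2)) ^ 2 = D := by
      rw [← Real.rpow_natCast, ← Real.rpow_mul hD]; norm_num
    rw [sq_abs, hfe, mul_pow, hsq, mul_pow, mul_pow, e1, e2] at h5
    nlinarith [h5]
  calc ∫ x, ρ x ^ 4 ≤ ∫ x, 9 / 4 * M * D * ρ x := by
        refine integral_mono_of_nonneg (Eventually.of_forall fun x => pow_nonneg (h0 x) 4)
          (hρ.const_mul _) (Eventually.of_forall fun x => ?_)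
        have := mul_le_mul_of_nonneg_right (hpt x) (h0 x)
        simp only
        nlinarith [this]
    _ = 9 / 4 * M ^ 2 * D := by rw [integral_const_mul]; ring

/-! ### The nonlinearity -/

/-- The coefficient `|z|^{p-1}` of the nonlinearity as a function of the density `ρ = |z|²`. -/
noncomputable def nl (p ρ : ℝ) : ℝ := ρ ^ ((p - 1) / 2)

/-- The potential energy density `|z|^{p+1}` as a function of the density `ρ = |z|²`. -/
noncomputable def pot (p ρ : ℝ) : ℝ := ρ ^ ((p + 1) / 2)

lemma nl_nonneg (p : ℝ) {ρ : ℝ} (h : 0 ≤ ρ) : 0 ≤ nl p ρ := Real.rpow_nonneg h _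

lemma nl_mono {p : ℝ} (hp : 1 < p) {ρ A : ℝ} (h : 0 ≤ ρ) (hA : ρ ≤ A) : nl p ρ ≤ nl p A :=
  Real.rpow_le_rpow h hA (by linarith)

lemma nl_continuous {p : ℝ} (hp : 1 < p) : Continuous (nl p) :=
  Real.continuous_rpow_const (by linarith)

lemma pot_eq {p : ℝ} (hp : 1 < p) {ρ : ℝ} (h : 0 ≤ ρ) : pot p ρ = nl p ρ * ρ := by
  unfold pot nl
  have : (p + 1) / 2 = (p - 1) / 2 + 1 := by ring
  rw [this, Real.rpow_add' h (by linarith), Real.rpow_one]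

lemma pot_hasDerivAt {p : ℝ} (hp : 1 < p) {f : ℝ → ℝ} {f' x : ℝ} (hf : HasDerivAt f f' x) :
    HasDerivAt (fun y => pot p (f y)) ((p + 1) / 2 * nl p (f x) * f') x := by
  have := hf.rpow_const (p := (p + 1) / 2) (Or.inr (by linarith))
  unfold pot nl
  convert this using 1
  rw [show (p + 1) / 2 - 1 = (p - 1) / 2 by ring]; ring

lemma rpow_sub_le {p : ℝ} (hp : 1 < p) {r s R : ℝ} (hs : 0 ≤ s) (hsr : s ≤ r) (hr : r ≤ R) :
    r ^ p - s ^ p ≤ p * R ^ (p - 1) * (r - s) := by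
  have h := (convex_Icc s r).norm_image_sub_le_of_norm_hasDerivWithin_le
    (f := fun x : ℝ => x ^ p) (f' := fun x => p * x ^ (p - 1)) (C := p * R ^ (p - 1))
    (x := s) (y := r)
    (fun x _ => (Real.hasDerivAt_rpow_const (Or.inr hp.le)).hasDerivWithinAt)
    (fun x hx => by
      have hx0 : 0 ≤ x := hs.trans hx.1
      rw [Real.norm_of_nonneg (by positivity)]
      have : x ^ (p - 1) ≤ R ^ (p - 1) := Real.rpow_le_rpow hx0 (hx.2.trans hr) (by linarith)
      exact mul_le_mul_of_nonneg_left this (by linarith))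
    (left_mem_Icc.2 hsr) (right_mem_Icc.2 hsr)
  rw [Real.norm_of_nonneg (sub_nonneg.2 hsr)] at h
  exact (le_abs_self _).trans h

/-- The nonlinearity `|z|^{p-1}z` is Lipschitz on bounded sets, in the form in which it enters the
`L²` estimate for a difference of two solutions. -/
lemma nl_diff {p : ℝ} (hp : 1 < p) {A : ℝ} {a b c d : ℝ} (h1 : a ^ 2 + b ^ 2 ≤ A)
    (h2 : c ^ 2 + d ^ 2 ≤ A) :
    |(nl p (c ^ 2 + d ^ 2) - nl p (a ^ 2 + b ^ 2)) * (a * d - c * b)|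
      ≤ p * nl p A * ((a - c) ^ 2 + (b - d) ^ 2) := by
  wlog hle : c ^ 2 + d ^ 2 ≤ a ^ 2 + b ^ 2 generalizing a b c d
  · have := this h2 h1 (not_le.1 hle).le
    convert this using 1
    · rw [abs_mul, abs_mul, abs_sub_comm, ← abs_neg (a * d - c * b)]; ring_nf
    · ring
  have key : ∀ y : ℝ, 0 ≤ y → nl p y = √y ^ (p - 1) := fun y hy => by
    unfold nl
    rw [Real.sqrt_eq_rpow, ← Real.rpow_mul hy]; ring_nf
  have hA : 0 ≤ A := le_trans (by positivity) h1
  rw [key _ (by positivity), key _ (by positivity), key A hA]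
  set r := √(a ^ 2 + b ^ 2) with hr
  set s := √(c ^ 2 + d ^ 2) with hs
  set w := √((a - c) ^ 2 + (b - d) ^ 2) with hw
  have r0 : 0 ≤ r := Real.sqrt_nonneg _
  have s0 : 0 ≤ s := Real.sqrt_nonneg _
  have w0 : 0 ≤ w := Real.sqrt_nonneg _
  have r2 : r ^ 2 = a ^ 2 + b ^ 2 := Real.sq_sqrt (by positivity)
  have s2 : s ^ 2 = c ^ 2 + d ^ 2 := Real.sq_sqrt (by positivity)
  have w2 : w ^ 2 = (a - c) ^ 2 + (b - d) ^ 2 := Real.sq_sqrt (by positivity)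
  have hsr : s ≤ r := Real.sqrt_le_sqrt hle
  have hrR : r ≤ √A := Real.sqrt_le_sqrt h1
  have hX : |a * d - c * b| ≤ w * s := by
    refine abs_le_of_sq_le_sq ?_ (by positivity)
    rw [mul_pow, w2, s2]
    nlinarith [sq_nonneg ((a - c) * c + (b - d) * d)]
  have hrs : r - s ≤ w := by
    have hcs : a * c + b * d ≤ r * s := by
      apply (abs_le_of_sq_le_sq' (b := r * s) _ (by positivity)).2
      rw [mul_pow, r2, s2]
      nlinarith [sq_nonneg (a * d - b * c)]
    apply (abs_le_of_sq_le_sq' (b := w) _ (by positivity)).2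
    nlinarith
  have e : ∀ y : ℝ, 0 ≤ y → y ^ p = y ^ (p - 1) * y := fun y hy => by
    have hp1 : p = (p - 1) + 1 := by ring
    conv_lhs => rw [hp1]
    rw [Real.rpow_add' hy (by linarith), Real.rpow_one]
  have hmono : s ^ (p - 1) ≤ r ^ (p - 1) := Real.rpow_le_rpow s0 hsr (by linarith)
  have hR := rpow_sub_le hp s0 hsr hrR
  have hpow : (r ^ (p - 1) - s ^ (p - 1)) * s ≤ r ^ p - s ^ p := by
    rw [e r r0, e s s0]
    nlinarith [mul_le_mul_of_nonneg_left hsr (Real.rpow_nonneg r0 (p - 1))]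
  have hC : 0 ≤ p * √A ^ (p - 1) := by positivity
  rw [abs_mul, abs_sub_comm, abs_of_nonneg (sub_nonneg.2 hmono), ← w2]
  calc (r ^ (p - 1) - s ^ (p - 1)) * |a * d - c * b|
      ≤ (r ^ (p - 1) - s ^ (p - 1)) * (w * s) :=
        mul_le_mul_of_nonneg_left hX (sub_nonneg.2 hmono)
    _ = w * ((r ^ (p - 1) - s ^ (p - 1)) * s) := by ring
    _ ≤ w * (p * √A ^ (p - 1) * w) := by
        refine mul_le_mul_of_nonneg_left ?_ w0
        exact hpow.trans (hR.trans (mul_le_mul_of_nonneg_left hrs hC))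
    _ = p * √A ^ (p - 1) * w ^ 2 := by ring


/-! ### Energy-class functions and solutions -/

/-- Smooth real functions `a`, `b` (real and imaginary part) whose time slices lie in `H¹`. -/
structure Reg (a b : ℝ → ℝ → ℝ) : Prop where
  sa : Sm a
  sb : Sm b
  la : ∀ t, MemLp (a t) 2
  lb : ∀ t, MemLp (b t) 2
  lax : ∀ t, MemLp (dx a t) 2
  lbx : ∀ t, MemLp (dx b t) 2

/-- The mass density `|u|²` of `u = a + ib`. -/
def den (a b : ℝ → ℝ → ℝ) (t x : ℝ) : ℝ := a t x ^ 2 + b t x ^ 2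

/-- The squared `H¹` norm of `u(t) = a(t) + i b(t)`. -/
noncomputable def Q (a b : ℝ → ℝ → ℝ) (t : ℝ) : ℝ :=
  ∫ x, (den a b t x + den (dx a) (dx b) t x)

/-- Solutions `u = a + ib` of `iuₜ - uₓₓ + |u|^{p-1}u = 0`, written as a real system, with `H²`
time slices. -/
structure Sol (p : ℝ) (a b : ℝ → ℝ → ℝ) : Prop extends Reg a b where
  hp : 1 < p
  laxx : ∀ t, MemLp (dx (dx a) t) 2
  lbxx : ∀ t, MemLp (dx (dx b) t) 2
  ea : ∀ t x, dt a t x = dx (dx b) t x - nl p (den a b t x) * b t x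
  eb : ∀ t x, dt b t x = -dx (dx a) t x + nl p (den a b t x) * a t x

lemma den_nonneg (a b : ℝ → ℝ → ℝ) (t x : ℝ) : 0 ≤ den a b t x := by unfold den; positivity

lemma den_cont {a b : ℝ → ℝ → ℝ} (ha : Sm a) (hb : Sm b) :
    Continuous (fun q : ℝ × ℝ => den a b q.1 q.2) :=
  (ha.cont.pow 2).add (hb.cont.pow 2)

lemma den_integrable {a b : ℝ → ℝ → ℝ} {t : ℝ} (ha : MemLp (a t) 2) (hb : MemLp (b t) 2) :
    Integrable (den a b t) :=
  ha.integrable_sq.add hb.integrable_sq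

lemma den_hasDerivAt_x {a b : ℝ → ℝ → ℝ} (ha : Sm a) (hb : Sm b) (t x : ℝ) :
    HasDerivAt (den a b t) (2 * (a t x * dx a t x + b t x * dx b t x)) x := by
  have := ((ha.hasDerivAt_x t x).pow 2).add ((hb.hasDerivAt_x t x).pow 2)
  refine HasDerivAt.congr_deriv this ?_
  norm_num; ring

lemma den_hasDerivAt_t {a b : ℝ → ℝ → ℝ} (ha : Sm a) (hb : Sm b) (t x : ℝ) :
    HasDerivAt (fun s => den a b s x) (2 * (a t x * dt a t x + b t x * dt b t x)) t := by
  have := ((ha.hasDerivAt_t t x).pow 2).add ((hb.hasDerivAt_t t x).pow 2)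
  refine HasDerivAt.congr_deriv this ?_
  norm_num; ring

/-- A continuous function dominated by an integrable one. -/
lemma int_bound {f g : ℝ → ℝ} {A : ℝ} (hc : Continuous f) (hg : Integrable g)
    (h : ∀ x, |f x| ≤ g x) (hA : ∫ x, g x ≤ A) : Integrable f ∧ ∫ x, |f x| ≤ A := by
  have hi : Integrable f := hg.mono' hc.aestronglyMeasurable (Eventually.of_forall h)
  exact ⟨hi, (integral_mono hi.abs hg h).trans hA⟩

namespace Reg

variable {a b : ℝ → ℝ → ℝ}

lemma iden (h : Reg a b) (t : ℝ) : Integrable (den a b t) := den_integrable (h.la t) (h.lb t)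

lemma idenx (h : Reg a b) (t : ℝ) : Integrable (den (dx a) (dx b) t) :=
  den_integrable (h.lax t) (h.lbx t)

lemma iQ (h : Reg a b) (t : ℝ) : Integrable (fun x => den a b t x + den (dx a) (dx b) t x) :=
  (h.iden t).add (h.idenx t)

lemma Q_eq (h : Reg a b) (t : ℝ) :
    Q a b t = (∫ x, den a b t x) + ∫ x, den (dx a) (dx b) t x :=
  integral_add (h.iden t) (h.idenx t)

lemma mass_nonneg (a b : ℝ → ℝ → ℝ) (t : ℝ) : 0 ≤ ∫ x, den a b t x :=
  integral_nonneg fun _ => den_nonneg _ _ _ _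

lemma mass_le_Q (h : Reg a b) (t : ℝ) : ∫ x, den a b t x ≤ Q a b t := by
  rw [h.Q_eq]; linarith [mass_nonneg (Morawetz.dx a) (Morawetz.dx b) t]

lemma kin_le_Q (h : Reg a b) (t : ℝ) : ∫ x, den (dx a) (dx b) t x ≤ Q a b t := by
  rw [h.Q_eq]; linarith [mass_nonneg a b t]

/-- The Sobolev embedding `‖u‖_∞² ≤ ‖u‖_{H¹}²`. -/
lemma den_le_Q (h : Reg a b) (t x : ℝ) : den a b t x ≤ Q a b t := by
  have hc : Continuous fun x => 2 * (a t x * dx a t x + b t x * dx b t x) := by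
    have h1 := cont_x h.sa.cont t
    have h2 := cont_x h.sb.cont t
    have h3 := cont_x h.sa.dx.cont t
    have h4 := cont_x h.sb.dx.cont t
    fun_prop
  obtain ⟨hi, hb⟩ := int_bound hc (h.iQ t) (A := Q a b t) (fun x => by
    unfold den
    rw [abs_le]
    constructor
    · nlinarith [sq_nonneg (a t x + dx a t x), sq_nonneg (b t x + dx b t x)]
    · nlinarith [sq_nonneg (a t x - dx a t x), sq_nonneg (b t x - dx b t x)]) le_rfl
  exact (le_abs_self _).trans
    ((abs_le_integral_deriv (den_hasDerivAt_x h.sa h.sb t) (h.iden t) hi x).trans hb)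

end Reg

/-- The `L²` stability estimate for the difference of a solution `u = a + ib` and an approximate
solution `v = c + id` with error `g`. The Gronwall weight `exp (-κ (t - t₁))` is put inside the
conservation law, which makes the source term bounded above by `η |g|²` pointwise. -/
lemma l2_diff {p : ℝ} {a b c d : ℝ → ℝ → ℝ} (hu : Sol p a b) (hv : Reg c d)
    {t₁ t₂ A Γ η : ℝ} (h12 : t₁ ≤ t₂) (hη : 0 < η)
    (hQu : ∀ t ∈ Icc t₁ t₂, Q a b t ≤ A) (hQv : ∀ t ∈ Icc t₁ t₂, Q c d t ≤ A)
    (g₁ g₂ : ℝ → ℝ → ℝ) (lg₁ : ∀ t, MemLp (g₁ t) 2) (lg₂ : ∀ t, MemLp (g₂ t) 2)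
    (ec : ∀ t x, dt c t x = dx (dx d) t x - nl p (den c d t x) * d t x + g₁ t x)
    (ed : ∀ t x, dt d t x = -dx (dx c) t x + nl p (den c d t x) * c t x + g₂ t x)
    (hΓ : ∀ t ∈ Icc t₁ t₂, ∫ x, den g₁ g₂ t x ≤ Γ) :
    ∫ x, ((a t₂ x - c t₂ x) ^ 2 + (b t₂ x - d t₂ x) ^ 2) ≤
      Real.exp ((2 * (p * nl p A) + 1 / η) * (t₂ - t₁)) *
        ((∫ x, ((a t₁ x - c t₁ x) ^ 2 + (b t₁ x - d t₁ x) ^ 2)) + (t₂ - t₁) * (η * Γ)) := by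
  have hp := hu.hp
  set κ := 2 * (p * nl p A) + 1 / η with hκ
  have hA : 0 ≤ A := by
    refine le_trans ?_ (hQu t₁ ⟨le_rfl, h12⟩)
    exact (Reg.mass_nonneg a b t₁).trans (hu.toReg.mass_le_Q t₁)
  have hκ0 : 0 ≤ κ := by
    have := nl_nonneg p hA
    positivity
  have ca := hu.sa.cont
  have cb := hu.sb.cont
  have cc := hv.sa.cont
  have cd := hv.sb.cont
  have cax := hu.sa.dx.cont
  have cbx := hu.sb.dx.cont
  have ccx := hv.sa.dx.cont
  have cdx := hv.sb.dx.cont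
  have caxx := hu.sa.dx.dx.cont
  have cbxx := hu.sb.dx.dx.cont
  have ccxx := hv.sa.dx.dx.cont
  have cdxx := hv.sb.dx.dx.cont
  have cat := hu.sa.dt.cont
  have cbt := hu.sb.dt.cont
  have cct := hv.sa.dt.cont
  have cdt := hv.sb.dt.cont
  let e : ℝ → ℝ := fun t => Real.exp (-κ * (t - t₁))
  have e0 : ∀ t, 0 < e t := fun t => Real.exp_pos _
  have e1 : ∀ t ∈ Icc t₁ t₂, e t ≤ 1 := fun t ht => by
    refine Real.exp_le_one_iff.2 ?_
    nlinarith [ht.1]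
  have ecn : Continuous fun q : ℝ × ℝ => e q.1 := by
    show Continuous fun q : ℝ × ℝ => Real.exp (-κ * (q.1 - t₁))
    fun_prop
  have ed' : ∀ t, HasDerivAt e (-κ * e t) t := fun t => by
    have := (((hasDerivAt_id t).sub_const t₁).const_mul (-κ)).exp
    refine HasDerivAt.congr_deriv this ?_
    simp only [e, id]; ring
  let N : ℝ → ℝ → ℝ := fun t x => (a t x - c t x) ^ 2 + (b t x - d t x) ^ 2
  let G : ℝ → ℝ → ℝ := fun t x => e t * N t x
  let Gt : ℝ → ℝ → ℝ := fun t x => -κ * e t * N t x + e t *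
    (2 * ((a t x - c t x) * (dt a t x - dt c t x) + (b t x - d t x) * (dt b t x - dt d t x)))
  let H : ℝ → ℝ → ℝ := fun t x => e t * (2 * ((a t x - c t x) * (dx b t x - dx d t x)
    - (b t x - d t x) * (dx a t x - dx c t x)))
  let Hx : ℝ → ℝ → ℝ := fun t x => e t * (2 * ((a t x - c t x) * (dx (dx b) t x - dx (dx d) t x)
    - (b t x - d t x) * (dx (dx a) t x - dx (dx c) t x)))
  have hG : ∀ t x, HasDerivAt (fun s => G s x) (Gt t x) t := fun t x => by
    have h1 := ((hu.sa.hasDerivAt_t t x).sub (hv.sa.hasDerivAt_t t x)).pow 2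
    have h2 := ((hu.sb.hasDerivAt_t t x).sub (hv.sb.hasDerivAt_t t x)).pow 2
    have := (ed' t).mul (h1.add h2)
    refine HasDerivAt.congr_deriv this ?_
    simp only [Gt, N, Pi.sub_apply, Pi.pow_apply, Pi.add_apply]; push_cast; ring
  have hH : ∀ t x, HasDerivAt (H t) (Hx t x) x := fun t x => by
    have h1 := (hu.sa.hasDerivAt_x t x).sub (hv.sa.hasDerivAt_x t x)
    have h2 := (hu.sb.hasDerivAt_x t x).sub (hv.sb.hasDerivAt_x t x)
    have h3 := (hu.sa.dx.hasDerivAt_x t x).sub (hv.sa.dx.hasDerivAt_x t x)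
    have h4 := (hu.sb.dx.hasDerivAt_x t x).sub (hv.sb.dx.hasDerivAt_x t x)
    have := (((h1.mul h4).sub (h2.mul h3)).const_mul 2).const_mul (e t)
    refine HasDerivAt.congr_deriv this ?_
    simp only [Hx, Pi.sub_apply]; ring
  have hGtc : Continuous (fun q : ℝ × ℝ => Gt q.1 q.2) := by
    simp only [Gt, N]; fun_prop
  have hHc : Continuous (fun q : ℝ × ℝ => H q.1 q.2) := by
    simp only [H]; fun_prop
  have hHxc : Continuous (fun q : ℝ × ℝ => Hx q.1 q.2) := by
    simp only [Hx]; fun_prop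
  have iN : ∀ t, Integrable (N t) := fun t =>
    (((hu.la t).sub (hv.la t)).integrable_sq).add (((hu.lb t).sub (hv.lb t)).integrable_sq)
  have iS : ∀ t, Integrable (fun x => 2 * ((den a b t x + den (dx a) (dx b) t x)
      + (den c d t x + den (dx c) (dx d) t x))) := fun t =>
    ((hu.toReg.iQ t).add (hv.iQ t)).const_mul 2
  have bS : ∀ t ∈ Icc t₁ t₂, ∫ x, 2 * ((den a b t x + den (dx a) (dx b) t x)
      + (den c d t x + den (dx c) (dx d) t x)) ≤ 4 * A := fun t ht => by
    rw [integral_const_mul, integral_add (hu.toReg.iQ t) (hv.iQ t)]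
    have h1 := hQu t ht
    have h2 := hQv t ht
    unfold Q at h1 h2
    linarith
  have hN : ∀ t x, N t x ≤ 2 * ((den a b t x + den (dx a) (dx b) t x)
      + (den c d t x + den (dx c) (dx d) t x)) := fun t x => by
    simp only [N, den]
    nlinarith [sq_nonneg (a t x + c t x), sq_nonneg (b t x + d t x), sq_nonneg (dx a t x),
      sq_nonneg (dx b t x), sq_nonneg (dx c t x), sq_nonneg (dx d t x)]
  have hN0 : ∀ t x, 0 ≤ N t x := fun t x => by simp only [N]; positivity
  have hΓ0 : 0 ≤ Γ := (Reg.mass_nonneg g₁ g₂ t₁).trans (hΓ t₁ ⟨le_rfl, h12⟩)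
  set L := p * nl p A with hL
  have hL0 : 0 ≤ L := by
    have := nl_nonneg p hA
    positivity
  -- the source term, after the linear part of the equation has cancelled
  have hB : ∀ t x, Gt t x - Hx t x = e t * (-κ * N t x
      + 2 * ((nl p (c t x ^ 2 + d t x ^ 2) - nl p (a t x ^ 2 + b t x ^ 2))
        * (a t x * d t x - c t x * b t x))
      - 2 * ((a t x - c t x) * g₁ t x + (b t x - d t x) * g₂ t x)) := fun t x => by
    simp only [Gt, Hx, N]
    rw [hu.ea, hu.eb, ec, ed]
    simp only [den]
    ring
  have hnl : ∀ t ∈ Icc t₁ t₂, ∀ x, |(nl p (c t x ^ 2 + d t x ^ 2) - nl p (a t x ^ 2 + b t x ^ 2))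
        * (a t x * d t x - c t x * b t x)| ≤ L * N t x := fun t ht x =>
    nl_diff hp ((hu.toReg.den_le_Q t x).trans (hQu t ht)) ((hv.den_le_Q t x).trans (hQv t ht))
  have hBabs : ∀ t ∈ Icc t₁ t₂, ∀ x, |Gt t x - Hx t x| ≤
      (κ + 2 * L + 1) * (2 * ((den a b t x + den (dx a) (dx b) t x)
      + (den c d t x + den (dx c) (dx d) t x))) + den g₁ g₂ t x := fun t ht x => by
    have h1 := abs_le.1 (hnl t ht x)
    have h2 : |2 * ((a t x - c t x) * g₁ t x + (b t x - d t x) * g₂ t x)|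
        ≤ N t x + den g₁ g₂ t x := by
      simp only [N, den]
      rw [abs_le]; constructor
      · nlinarith [sq_nonneg (a t x - c t x + g₁ t x), sq_nonneg (b t x - d t x + g₂ t x)]
      · nlinarith [sq_nonneg (a t x - c t x - g₁ t x), sq_nonneg (b t x - d t x - g₂ t x)]
    have h2 := abs_le.1 h2
    have h3 : (κ + 2 * L + 1) * N t x ≤ (κ + 2 * L + 1) * (2 * ((den a b t x
        + den (dx a) (dx b) t x) + (den c d t x + den (dx c) (dx d) t x))) :=
      mul_le_mul_of_nonneg_left (hN t x) (by positivity)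
    have h4 := mul_nonneg hκ0 (hN0 t x)
    refine le_trans ?_ (add_le_add_left h3 _)
    rw [hB, abs_mul, abs_of_pos (e0 t)]
    refine (mul_le_of_le_one_left (abs_nonneg _) (e1 t ht)).trans ?_
    rw [abs_le]
    constructor <;> nlinarith
  have ig : ∀ t, Integrable (den g₁ g₂ t) := fun t => den_integrable (lg₁ t) (lg₂ t)
  have BB := fun t ht => int_bound (f := fun x => Gt t x - Hx t x)
    (g := fun x => (κ + 2 * L + 1) * (2 * ((den a b t x + den (dx a) (dx b) t x)
      + (den c d t x + den (dx c) (dx d) t x))) + den g₁ g₂ t x)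
    ((cont_x hGtc t).sub (cont_x hHxc t))
    (((iS t).const_mul (κ + 2 * L + 1)).add (ig t)) (hBabs t ht)
    (A := (κ + 2 * L + 1) * (4 * A) + Γ + 4 * A) (by
      have hs : ∫ x, ((κ + 2 * L + 1) * (2 * ((den a b t x + den (dx a) (dx b) t x)
        + (den c d t x + den (dx c) (dx d) t x))) + den g₁ g₂ t x) ≤
          (κ + 2 * L + 1) * (4 * A) + Γ := by
        rw [integral_add ((iS t).const_mul _) (ig t), integral_const_mul]
        exact add_le_add (mul_le_mul_of_nonneg_left (bS t ht) (by positivity)) (hΓ t ht)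
      exact hs.trans (by linarith))
  have HH := fun t ht => int_bound (cont_x hHc t) (iS t) (fun x => by
      rw [abs_mul, abs_of_pos (e0 t)]
      refine (mul_le_of_le_one_left (abs_nonneg _) (e1 t ht)).trans ?_
      simp only [den]
      rw [abs_le]; constructor
      · nlinarith [sq_nonneg (a t x - c t x + (dx b t x - dx d t x)),
          sq_nonneg (b t x - d t x - (dx a t x - dx c t x)),
          sq_nonneg (a t x + c t x), sq_nonneg (b t x + d t x),
          sq_nonneg (dx a t x + dx c t x), sq_nonneg (dx b t x + dx d t x)]
      · nlinarith [sq_nonneg (a t x - c t x - (dx b t x - dx d t x)),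
          sq_nonneg (b t x - d t x + (dx a t x - dx c t x)),
          sq_nonneg (a t x + c t x), sq_nonneg (b t x + d t x),
          sq_nonneg (dx a t x + dx c t x), sq_nonneg (dx b t x + dx d t x)])
    (A := (κ + 2 * L + 1) * (4 * A) + Γ + 4 * A) ((bS t ht).trans (by
      have : 0 ≤ (κ + 2 * L + 1) * (4 * A) := by positivity
      linarith))
  obtain ⟨-, -, hii, hfin⟩ := flux_facts hG hH hHc hGtc hHxc h12
    ((iN t₁).const_mul _) ((iN t₂).const_mul _) (fun t ht => (HH t ht).1) (fun t ht => (HH t ht).2)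
    (fun t ht => (BB t ht).1) (fun t ht => (BB t ht).2)
  have hup : ∫ t in t₁..t₂, ∫ x, (Gt t x - Hx t x) ≤ ∫ t in t₁..t₂, η * Γ := by
    refine intervalIntegral.integral_mono_on h12 hii (by simp) fun t ht => ?_
    have hle : ∀ x, Gt t x - Hx t x ≤ η * den g₁ g₂ t x := fun x => by
      have h1 := (abs_le.1 (hnl t ht x)).2
      have h2 : -(2 * ((a t x - c t x) * g₁ t x + (b t x - d t x) * g₂ t x))
          ≤ 1 / η * N t x + η * den g₁ g₂ t x := by
        have h3 : 0 ≤ 1 / η * ((a t x - c t x + η * g₁ t x) ^ 2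
          + (b t x - d t x + η * g₂ t x) ^ 2) := by positivity
        have h4 : 1 / η * ((a t x - c t x + η * g₁ t x) ^ 2
          + (b t x - d t x + η * g₂ t x) ^ 2) = 1 / η * N t x + η * den g₁ g₂ t x
            + 2 * ((a t x - c t x) * g₁ t x + (b t x - d t x) * g₂ t x) := by
          simp only [N, den]; field_simp; ring
        linarith
      rw [hB]
      have h5 : -κ * N t x
      + 2 * ((nl p (c t x ^ 2 + d t x ^ 2) - nl p (a t x ^ 2 + b t x ^ 2))
        * (a t x * d t x - c t x * b t x))
      - 2 * ((a t x - c t x) * g₁ t x + (b t x - d t x) * g₂ t x) ≤ η * den g₁ g₂ t x := by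
        have h6 : κ * N t x = 2 * (L * N t x) + 1 / η * N t x := by rw [hκ]; ring
        linarith
      refine (mul_le_mul_of_nonneg_left h5 (e0 t).le).trans ?_
      exact mul_le_of_le_one_left (mul_nonneg hη.le (den_nonneg _ _ _ _)) (e1 t ht)
    calc ∫ x, (Gt t x - Hx t x) ≤ ∫ x, η * den g₁ g₂ t x :=
          integral_mono (BB t ht).1 ((ig t).const_mul _) hle
      _ ≤ η * Γ := by
          rw [integral_const_mul]; exact mul_le_mul_of_nonneg_left (hΓ t ht) hη.le
  rw [← hfin, intervalIntegral.integral_const, smul_eq_mul] at hup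
  simp only [G] at hup
  rw [integral_const_mul, integral_const_mul] at hup
  have e11 : e t₁ = 1 := by simp [e]
  rw [e11, one_mul] at hup
  have ee : Real.exp (κ * (t₂ - t₁)) * e t₂ = 1 := by
    simp only [e]; rw [← Real.exp_add]; simp
  calc ∫ x, N t₂ x = Real.exp (κ * (t₂ - t₁)) * (e t₂ * ∫ x, N t₂ x) := by
        rw [← mul_assoc, ee, one_mul]
    _ ≤ Real.exp (κ * (t₂ - t₁)) * ((∫ x, N t₁ x) + (t₂ - t₁) * (η * Γ)) :=
        mul_le_mul_of_nonneg_left (by linarith) (Real.exp_pos _).le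


/-! ### The `L²` bound for the time derivative -/

namespace Sol

variable {p : ℝ} {a b : ℝ → ℝ → ℝ}

lemma nl_mul_memLp (h : Sol p a b) (t : ℝ) {f : ℝ → ℝ} (hf : MemLp f 2) (hc : Continuous f) :
    MemLp (fun x => nl p (den a b t x) * f x) 2 := by
  have hcd := cont_x (den_cont h.sa h.sb) t
  refine hf.of_le_mul (c := nl p (Q a b t))
    ((((nl_continuous h.hp).comp hcd).mul hc).aestronglyMeasurable)
    (Eventually.of_forall fun x => ?_)
  have h0 := nl_nonneg p (den_nonneg a b t x)
  rw [norm_mul, Real.norm_of_nonneg h0]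
  exact mul_le_mul_of_nonneg_right
    (nl_mono h.hp (den_nonneg a b t x) (h.toReg.den_le_Q t x)) (norm_nonneg _)

lemma lat (h : Sol p a b) (t : ℝ) : MemLp (dt a t) 2 := by
  have := (h.lbxx t).sub (h.nl_mul_memLp t (h.lb t) (cont_x h.sb.cont t))
  have e : dt a t = fun x => dx (dx b) t x - nl p (den a b t x) * b t x := funext (h.ea t)
  rw [e]; exact this

lemma lbt (h : Sol p a b) (t : ℝ) : MemLp (dt b t) 2 := by
  have := (h.laxx t).neg.add (h.nl_mul_memLp t (h.la t) (cont_x h.sa.cont t))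
  have e : dt b t = fun x => -dx (dx a) t x + nl p (den a b t x) * a t x := funext (h.eb t)
  rw [e]; exact this

end Sol

lemma Sm.frozen {f : ℝ → ℝ → ℝ} (hf : Sm f) (s : ℝ) : Sm (fun _ x => f s x) :=
  ContDiff.comp (g := fun q : ℝ × ℝ => f q.1 q.2) (f := fun q : ℝ × ℝ => (s, q.2)) hf
    (contDiff_const.prodMk contDiff_snd)

lemma Sm.shift {f : ℝ → ℝ → ℝ} (hf : Sm f) (h : ℝ) : Sm (fun t x => f (t - h) x) :=
  ContDiff.comp (g := fun q : ℝ × ℝ => f q.1 q.2) (f := fun q : ℝ × ℝ => (q.1 - h, q.2)) hf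
    ((contDiff_fst.sub contDiff_const).prodMk contDiff_snd)

/-- `uₜ` stays bounded in `L²` as long as `u` stays bounded in `H¹`: the difference quotients are
controlled by comparing `u` with `u(t₁)` for a short time and then with its own time shifts. -/
lemma ut_bound {p : ℝ} {a b : ℝ → ℝ → ℝ} (hu : Sol p a b) {t₁ t₂ A : ℝ} (h12 : t₁ ≤ t₂)
    (hQ : ∀ t ∈ Icc t₁ t₂, Q a b t ≤ A) :
    ∃ K, ∀ t ∈ Icc t₁ t₂, ∫ x, den (dt a) (dt b) t x ≤ K := by
  have hA : 0 ≤ A := by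
    refine le_trans ?_ (hQ t₁ ⟨le_rfl, h12⟩)
    exact (Reg.mass_nonneg a b t₁).trans (hu.toReg.mass_le_Q t₁)
  set κ := 2 * (p * nl p A) with hκ
  have hκ0 : 0 ≤ κ := by
    have := nl_nonneg p hA
    have := hu.hp
    positivity
  set Γ := ∫ x, den (dt a) (dt b) t₁ x with hΓ
  have hΓ0 : 0 ≤ Γ := Reg.mass_nonneg _ _ _
  set T := t₂ - t₁ with hT
  have hT0 : 0 ≤ T := by linarith
  have step1 : ∀ h, 0 < h → t₁ + h ≤ t₂ →
      ∫ x, ((a (t₁ + h) x - a t₁ x) ^ 2 + (b (t₁ + h) x - b t₁ x) ^ 2)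
        ≤ Real.exp (κ * T + 1) * (h ^ 2 * Γ) := by
    intro h h0 h2
    have hv : Reg (fun _ x => a t₁ x) (fun _ x => b t₁ x) :=
      ⟨hu.sa.frozen _, hu.sb.frozen _, fun _ => hu.la _, fun _ => hu.lb _, fun _ => hu.lax _,
        fun _ => hu.lbx _⟩
    have key := l2_diff hu hv (t₁ := t₁) (t₂ := t₁ + h) (A := A) (Γ := Γ) (η := h) (by linarith) h0
      (fun t ht => hQ t ⟨ht.1, ht.2.trans h2⟩) (fun t ht => hQ t₁ ⟨le_rfl, h12⟩)
      (fun _ x => -dt a t₁ x) (fun _ x => -dt b t₁ x) (fun _ => (hu.lat t₁).neg)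
      (fun _ => (hu.lbt t₁).neg)
      (fun t x => by
        have e : dt (fun _ x => a t₁ x) t x = 0 := by simp [dt]
        have := hu.ea t₁ x
        rw [e]
        show 0 = dx (dx b) t₁ x - nl p (den a b t₁ x) * b t₁ x + -dt a t₁ x
        linarith)
      (fun t x => by
        have e : dt (fun _ x => b t₁ x) t x = 0 := by simp [dt]
        have := hu.eb t₁ x
        rw [e]
        show 0 = -dx (dx a) t₁ x + nl p (den a b t₁ x) * a t₁ x + -dt b t₁ x
        linarith)
      (fun t _ => by simp only [den, neg_sq]; exact le_rfl)
    refine key.trans ?_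
    have e1 : (κ + 1 / h) * (t₁ + h - t₁) = κ * h + 1 := by field_simp; ring
    rw [e1]
    simp only [sub_self]
    have e2 : (∫ _x : ℝ, ((0:ℝ) ^ 2 + 0 ^ 2)) + (t₁ + h - t₁) * (h * Γ) = h ^ 2 * Γ := by
      simp; ring
    rw [e2]
    refine mul_le_mul_of_nonneg_right (Real.exp_le_exp.2 ?_) (by positivity)
    have : κ * h ≤ κ * T := mul_le_mul_of_nonneg_left (by linarith) hκ0
    linarith
  have step2 : ∀ h t, 0 < h → t₁ + h ≤ t → t ≤ t₂ →
      ∫ x, ((a t x - a (t - h) x) ^ 2 + (b t x - b (t - h) x) ^ 2)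
        ≤ Real.exp ((κ + 1) * T) * (Real.exp (κ * T + 1) * (h ^ 2 * Γ)) := by
    intro h t h0 h1 h2
    have hv : Reg (fun t x => a (t - h) x) (fun t x => b (t - h) x) :=
      ⟨hu.sa.shift _, hu.sb.shift _, fun _ => hu.la _, fun _ => hu.lb _, fun _ => hu.lax _,
        fun _ => hu.lbx _⟩
    have ds : ∀ (f : ℝ → ℝ → ℝ) t x, dt (fun t x => f (t - h) x) t x = dt f (t - h) x :=
      fun f t x => deriv_comp_sub_const (f := fun s => f s x) h t
    have key := l2_diff hu hv (t₁ := t₁ + h) (t₂ := t) (A := A) (Γ := 0) (η := 1) h1 one_pos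
      (fun s hs => hQ s ⟨by linarith [hs.1], by linarith [hs.2]⟩)
      (fun s hs => hQ (s - h) ⟨by linarith [hs.1], by linarith [hs.2]⟩)
      (fun _ _ => 0) (fun _ _ => 0) (fun _ => MemLp.zero) (fun _ => MemLp.zero)
      (fun t x => by
        rw [ds, hu.ea, add_zero]; rfl)
      (fun t x => by
        rw [ds, hu.eb, add_zero]; rfl)
      (fun t _ => by simp [den])
    refine key.trans ?_
    simp only [add_sub_cancel_right, mul_zero, add_zero, div_one]
    refine mul_le_mul (Real.exp_le_exp.2 ?_) (step1 h h0 (by linarith))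
      (integral_nonneg fun x => by positivity) (Real.exp_pos _).le
    exact mul_le_mul_of_nonneg_left (by linarith) (by linarith)
  refine ⟨Real.exp ((κ + 1) * T) * (Real.exp (κ * T + 1) * Γ), fun t ht => ?_⟩
  rcases eq_or_lt_of_le ht.1 with rfl | h1
  · rw [← mul_assoc]
    refine le_mul_of_one_le_left hΓ0 (one_le_mul_of_one_le_of_one_le ?_ ?_)
    · exact Real.one_le_exp (by positivity)
    · exact Real.one_le_exp (by positivity)
  let h : ℕ → ℝ := fun k => (t - t₁) / (k + 1)
  have hpos : ∀ k, 0 < h k := fun k => div_pos (by linarith) (by positivity)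
  have hle : ∀ k, h k ≤ t - t₁ := fun k => by
    refine div_le_self (by linarith) ?_
    have : (0:ℝ) ≤ k := Nat.cast_nonneg k
    linarith
  have hlim : Tendsto (fun k => -h k) atTop (𝓝[≠] 0) := by
    refine tendsto_nhdsWithin_iff.2 ⟨?_, Eventually.of_forall fun k => ?_⟩
    · have := (tendsto_one_div_add_atTop_nhds_zero_nat (𝕜 := ℝ)).const_mul (-(t - t₁))
      rw [mul_zero] at this
      refine this.congr fun k => ?_
      simp only [h]; ring
    · have := hpos k
      simp only [mem_compl_iff, mem_singleton_iff]
      linarith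
  have slope : ∀ f : ℝ → ℝ → ℝ, Sm f → ∀ x,
      Tendsto (fun k => (h k)⁻¹ ^ 2 * (f t x - f (t - h k) x) ^ 2) atTop (𝓝 (dt f t x ^ 2)) := by
    intro f hf x
    have := ((hasDerivAt_iff_tendsto_slope_zero.1 (hf.hasDerivAt_t t x)).comp hlim).pow 2
    refine this.congr fun k => ?_
    simp only [Function.comp, smul_eq_mul, inv_neg, ← sub_eq_add_neg]
    ring
  refine (fatou_real (F := fun k x => (h k)⁻¹ ^ 2 * ((a t x - a (t - h k) x) ^ 2
    + (b t x - b (t - h k) x) ^ 2)) (f := den (dt a) (dt b) t) ?_ ?_ ?_ ?_).2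
  · intro k
    exact ((((hu.la t).sub (hu.la (t - h k))).integrable_sq).add
      (((hu.lb t).sub (hu.lb (t - h k))).integrable_sq)).const_mul _
  · intro k x; positivity
  · intro x
    simp only [mul_add]
    exact (slope a hu.sa x).add (slope b hu.sb x)
  · intro k
    rw [integral_const_mul]
    have := step2 (h k) t (hpos k) (by linarith [hle k]) ht.2
    have hk := hpos k
    calc (h k)⁻¹ ^ 2 * _ ≤ (h k)⁻¹ ^ 2 * (Real.exp ((κ + 1) * T) *
          (Real.exp (κ * T + 1) * ((h k) ^ 2 * Γ))) :=
          mul_le_mul_of_nonneg_left this (by positivity)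
      _ = _ := by field_simp

/-! ### Conservation of mass and energy -/

/-- The conserved energy `½‖uₓ‖₂² + (p+1)⁻¹ ‖u‖_{p+1}^{p+1}`. -/
noncomputable def en (p : ℝ) (a b : ℝ → ℝ → ℝ) (t : ℝ) : ℝ :=
  ∫ x, (1 / 2 * den (dx a) (dx b) t x + pot p (den a b t x) / (p + 1))

lemma pot_nonneg (p : ℝ) {ρ : ℝ} (h : 0 ≤ ρ) : 0 ≤ pot p ρ := Real.rpow_nonneg h _

namespace Sol

variable {p : ℝ} {a b : ℝ → ℝ → ℝ}

lemma pot_le (h : Sol p a b) (t x : ℝ) :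
    pot p (den a b t x) ≤ nl p (Q a b t) * den a b t x := by
  rw [pot_eq h.hp (den_nonneg _ _ _ _)]
  exact mul_le_mul_of_nonneg_right
    (nl_mono h.hp (den_nonneg _ _ _ _) (h.toReg.den_le_Q t x)) (den_nonneg _ _ _ _)

lemma pot_cont (h : Sol p a b) : Continuous (fun q : ℝ × ℝ => pot p (den a b q.1 q.2)) := by
  have : (fun q : ℝ × ℝ => pot p (den a b q.1 q.2)) =
      fun q => nl p (den a b q.1 q.2) * den a b q.1 q.2 :=
    funext fun q => pot_eq h.hp (den_nonneg _ _ _ _)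
  rw [this]
  have hd := den_cont h.sa h.sb
  exact ((nl_continuous h.hp).comp hd).mul hd

lemma ipot (h : Sol p a b) (t : ℝ) : Integrable (fun x => pot p (den a b t x)) :=
  ((h.toReg.iden t).const_mul (nl p (Q a b t))).mono' (cont_x (f := fun t x => pot p (den a b t x)) h.pot_cont t).aestronglyMeasurable
    (Eventually.of_forall fun x => by
      rw [Real.norm_of_nonneg (pot_nonneg p (den_nonneg _ _ _ _))]; exact h.pot_le t x)

lemma ien (h : Sol p a b) (t : ℝ) :
    Integrable (fun x => 1 / 2 * den (dx a) (dx b) t x + pot p (den a b t x) / (p + 1)) :=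
  ((h.toReg.idenx t).const_mul _).add ((h.ipot t).div_const _)

lemma Q_le_en (h : Sol p a b) (t : ℝ) : Q a b t ≤ (∫ x, den a b t x) + 2 * en p a b t := by
  rw [h.toReg.Q_eq, en, integral_add ((h.toReg.idenx t).const_mul _) ((h.ipot t).div_const _),
    integral_const_mul]
  have : 0 ≤ ∫ x, pot p (den a b t x) / (p + 1) := integral_nonneg fun x =>
    div_nonneg (pot_nonneg p (den_nonneg _ _ _ _)) (by linarith [h.hp])
  linarith

lemma en_le (h : Sol p a b) (t : ℝ) :
    en p a b t ≤ Q a b t / 2 + nl p (Q a b t) * Q a b t := by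
  have hQ0 : 0 ≤ Q a b t := (Reg.mass_nonneg a b t).trans (h.toReg.mass_le_Q t)
  rw [en, integral_add ((h.toReg.idenx t).const_mul _) ((h.ipot t).div_const _),
    integral_const_mul]
  have h1 : ∫ x, pot p (den a b t x) / (p + 1) ≤ ∫ x, nl p (Q a b t) * den a b t x :=
    integral_mono ((h.ipot t).div_const _) ((h.toReg.iden t).const_mul _) fun x =>
      (div_le_self (pot_nonneg p (den_nonneg _ _ _ _)) (by linarith [h.hp])).trans (h.pot_le t x)
  rw [integral_const_mul] at h1
  have h2 := mul_le_mul_of_nonneg_left (h.toReg.mass_le_Q t) (nl_nonneg p hQ0)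
  have h3 := h.toReg.kin_le_Q t
  linarith

/-- The local mass conservation law `∂ₜ|u|² = ∂ₓ(2 Im(ū uₓ))`, integrated over a strip. -/
lemma mass_flux (h : Sol p a b) {t₁ t₂ A : ℝ} (h12 : t₁ ≤ t₂)
    (hQ : ∀ t ∈ Icc t₁ t₂, Q a b t ≤ A) :
    Integrable (fun x => ∫ t in t₁..t₂, 2 * (a t x * dx b t x - b t x * dx a t x)) ∧
    Integrable (fun x => ∫ t in t₁..t₂, 2 * (a t x * dx (dx b) t x - b t x * dx (dx a) t x)) ∧
    ∫ x, den a b t₂ x = ∫ x, den a b t₁ x := by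
  have ca := h.sa.cont
  have cb := h.sb.cont
  have cax := h.sa.dx.cont
  have cbx := h.sb.dx.cont
  have caxx := h.sa.dx.dx.cont
  have cbxx := h.sb.dx.dx.cont
  have cat := h.sa.dt.cont
  have cbt := h.sb.dt.cont
  have hA : 0 ≤ A := (Reg.mass_nonneg a b t₁).trans
    ((h.toReg.mass_le_Q t₁).trans (hQ t₁ ⟨le_rfl, h12⟩))
  have hB : ∀ t x, 2 * (a t x * dt a t x + b t x * dt b t x) -
      2 * (a t x * dx (dx b) t x - b t x * dx (dx a) t x) = 0 := fun t x => by
    rw [h.ea, h.eb]; ring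
  have hHc : Continuous (fun q : ℝ × ℝ =>
      2 * (a q.1 q.2 * dx b q.1 q.2 - b q.1 q.2 * dx a q.1 q.2)) := by fun_prop
  have HH := fun t ht => int_bound (f := fun x => 2 * (a t x * dx b t x - b t x * dx a t x))
    (g := fun x => den a b t x + den (dx a) (dx b) t x)
    (cont_x (f := fun t x => 2 * (a t x * dx b t x - b t x * dx a t x)) hHc t) (h.toReg.iQ t) (fun x => by
      unfold den
      rw [abs_le]; constructor
      · nlinarith [sq_nonneg (a t x + dx b t x), sq_nonneg (b t x - dx a t x)]
      · nlinarith [sq_nonneg (a t x - dx b t x), sq_nonneg (b t x + dx a t x)]) (hQ t ht)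
  obtain ⟨f1, f2, -, key⟩ := flux_facts (G := den a b)
    (H := fun t x => 2 * (a t x * dx b t x - b t x * dx a t x))
    (Gt := fun t x => 2 * (a t x * dt a t x + b t x * dt b t x))
    (Hx := fun t x => 2 * (a t x * dx (dx b) t x - b t x * dx (dx a) t x))
    (den_hasDerivAt_t h.sa h.sb)
    (fun t x => by
      have := (((h.sa.hasDerivAt_x t x).mul (h.sb.dx.hasDerivAt_x t x)).sub
        ((h.sb.hasDerivAt_x t x).mul (h.sa.dx.hasDerivAt_x t x))).const_mul 2
      refine HasDerivAt.congr_deriv this ?_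
      ring)
    hHc (by fun_prop) (by fun_prop) h12 (h.toReg.iden t₁) (h.toReg.iden t₂)
    (fun t ht => (HH t ht).1) (fun t ht => (HH t ht).2)
    (fun t _ => by simp only [hB]; exact integrable_zero _ _ _)
    (fun t _ => by simp only [hB]; simpa using hA)
  simp only [hB, integral_zero, intervalIntegral.integral_zero] at key
  exact ⟨f1, f2, by linarith⟩

/-- Mass is conserved as long as the `H¹` norm stays bounded. -/
lemma mass_cons (h : Sol p a b) {t₁ t₂ A : ℝ} (h12 : t₁ ≤ t₂)
    (hQ : ∀ t ∈ Icc t₁ t₂, Q a b t ≤ A) : ∫ x, den a b t₂ x = ∫ x, den a b t₁ x :=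
  (h.mass_flux h12 hQ).2.2

/-- Energy is conserved as long as the `H¹` norm stays bounded. -/
lemma en_cons (h : Sol p a b) {t₁ t₂ A : ℝ} (h12 : t₁ ≤ t₂)
    (hQ : ∀ t ∈ Icc t₁ t₂, Q a b t ≤ A) : en p a b t₂ = en p a b t₁ := by
  have ca := h.sa.cont
  have cb := h.sb.cont
  have cax := h.sa.dx.cont
  have cbx := h.sb.dx.cont
  have caxx := h.sa.dx.dx.cont
  have cbxx := h.sb.dx.dx.cont
  have cat := h.sa.dt.cont
  have cbt := h.sb.dt.cont
  have catx := h.sa.dt.dx.cont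
  have cbtx := h.sb.dt.dx.cont
  have cnl : Continuous (fun q : ℝ × ℝ => nl p (den a b q.1 q.2)) :=
    (nl_continuous h.hp).comp (den_cont h.sa h.sb)
  have hp1 : p + 1 ≠ 0 := by linarith [h.hp]
  obtain ⟨K, hK⟩ := ut_bound h h12 hQ
  have hA : 0 ≤ A := (Reg.mass_nonneg a b t₁).trans
    ((h.toReg.mass_le_Q t₁).trans (hQ t₁ ⟨le_rfl, h12⟩))
  have hK0 : 0 ≤ K := (Reg.mass_nonneg _ _ t₁).trans (hK t₁ ⟨le_rfl, h12⟩)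
  have hB : ∀ t x, (dx a t x * dx (dt a) t x + dx b t x * dx (dt b) t x
      + nl p (den a b t x) * (a t x * dt a t x + b t x * dt b t x)) -
      (dx (dx a) t x * dt a t x + dx a t x * dx (dt a) t x
        + (dx (dx b) t x * dt b t x + dx b t x * dx (dt b) t x)) = 0 := fun t x => by
    have e1 : dx (dx b) t x = dt a t x + nl p (den a b t x) * b t x := by rw [h.ea]; ring
    have e2 : dx (dx a) t x = -dt b t x + nl p (den a b t x) * a t x := by rw [h.eb]; ring
    rw [e1, e2]; ring
  have hHc : Continuous (fun q : ℝ × ℝ =>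
      dx a q.1 q.2 * dt a q.1 q.2 + dx b q.1 q.2 * dt b q.1 q.2) := by fun_prop
  have HH := fun t ht => int_bound (f := fun x => dx a t x * dt a t x + dx b t x * dt b t x)
    (g := fun x => den (dx a) (dx b) t x + den (dt a) (dt b) t x) (A := A + K)
    (cont_x (f := fun t x => dx a t x * dt a t x + dx b t x * dt b t x) hHc t)
    ((h.toReg.idenx t).add (den_integrable (h.lat t) (h.lbt t))) (fun x => by
      unfold den
      rw [abs_le]; constructor
      · nlinarith [sq_nonneg (dx a t x + dt a t x), sq_nonneg (dx b t x + dt b t x)]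
      · nlinarith [sq_nonneg (dx a t x - dt a t x), sq_nonneg (dx b t x - dt b t x)])
    (by
      rw [integral_add (h.toReg.idenx t) (den_integrable (h.lat t) (h.lbt t))]
      exact add_le_add ((h.toReg.kin_le_Q t).trans (hQ t ht)) (hK t ht))
  have key := (flux_facts
    (G := fun t x => 1 / 2 * den (dx a) (dx b) t x + pot p (den a b t x) / (p + 1))
    (H := fun t x => dx a t x * dt a t x + dx b t x * dt b t x)
    (Gt := fun t x => dx a t x * dx (dt a) t x + dx b t x * dx (dt b) t x
      + nl p (den a b t x) * (a t x * dt a t x + b t x * dt b t x))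
    (Hx := fun t x => dx (dx a) t x * dt a t x + dx a t x * dx (dt a) t x
        + (dx (dx b) t x * dt b t x + dx b t x * dx (dt b) t x))
    (fun t x => by
      have := ((den_hasDerivAt_t h.sa.dx h.sb.dx t x).const_mul (1 / 2)).add
        ((pot_hasDerivAt h.hp (den_hasDerivAt_t h.sa h.sb t x)).div_const (p + 1))
      refine HasDerivAt.congr_deriv this ?_
      rw [h.sa.comm, h.sb.comm]
      field_simp)
    (fun t x => ((h.sa.dx.hasDerivAt_x t x).mul (h.sa.dt.hasDerivAt_x t x)).add
        ((h.sb.dx.hasDerivAt_x t x).mul (h.sb.dt.hasDerivAt_x t x)))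
    hHc (by fun_prop) (by fun_prop) h12 (h.ien t₁) (h.ien t₂)
    (fun t ht => (HH t ht).1) (fun t ht => (HH t ht).2)
    (fun t _ => by simp only [hB]; exact integrable_zero _ _ _)
    (fun t _ => by simp only [hB]; simpa using add_nonneg hA hK0)).2.2.2
  simp only [hB, integral_zero, intervalIntegral.integral_zero] at key
  unfold en
  linarith

/-- The a priori `H¹` bound given by the conservation laws; its strength is independent of the
bound `A` that is used to justify them. -/
lemma Q_prop (h : Sol p a b) {s t A N : ℝ} (hQ : ∀ r ∈ uIcc s t, Q a b r ≤ A)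
    (hs : Q a b s ≤ N) : Q a b t ≤ 2 * N + 2 * (nl p N * N) := by
  have hm : ∫ x, den a b t x = ∫ x, den a b s x := by
    rcases le_total s t with hst | hst
    · rw [uIcc_of_le hst] at hQ; exact h.mass_cons hst hQ
    · rw [uIcc_of_ge hst] at hQ; exact (h.mass_cons hst hQ).symm
  have he : en p a b t = en p a b s := by
    rcases le_total s t with hst | hst
    · rw [uIcc_of_le hst] at hQ; exact h.en_cons hst hQ
    · rw [uIcc_of_ge hst] at hQ; exact (h.en_cons hst hQ).symm
  have h1 := h.Q_le_en t
  have h2 := h.en_le s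
  have h3 := h.toReg.mass_le_Q s
  have h4 : 0 ≤ Q a b s := (Reg.mass_nonneg a b s).trans h3
  have h5 : nl p (Q a b s) * Q a b s ≤ nl p N * N :=
    mul_le_mul (nl_mono h.hp h4 hs) hs h4 (nl_nonneg p (h4.trans hs))
  rw [hm, he] at h1
  linarith

end Sol

/-! ### Local boundedness of the `H¹` norm -/

lemma Reg.isClosed_Q_le {a b : ℝ → ℝ → ℝ} (h : Reg a b) (N : ℝ) : IsClosed {t | Q a b t ≤ N} := by
  refine IsSeqClosed.isClosed fun s t hs hst => ?_
  have hc : Continuous fun q : ℝ × ℝ => den a b q.1 q.2 + den (dx a) (dx b) q.1 q.2 :=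
    (den_cont h.sa h.sb).add (den_cont h.sa.dx h.sb.dx)
  exact (fatou_real (fun k => h.iQ (s k))
    (fun k x => add_nonneg (den_nonneg _ _ _ _) (den_nonneg _ _ _ _))
    (fun x => ((cont_t (f := fun t x => den a b t x + den (dx a) (dx b) t x) hc x).tendsto t).comp
      hst) hs).2

lemma bdd_of_compact {f : ℝ → ℝ} {K : Set ℝ} (hK : IsCompact K)
    (h : ∀ t ∈ K, ∃ N, ∀ᶠ s in 𝓝 t, f s ≤ N) : ∃ A, ∀ t ∈ K, f t ≤ A := by
  refine hK.induction_on (p := fun S => ∃ A, ∀ t ∈ S, f t ≤ A) ⟨0, by simp⟩ ?_ ?_ ?_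
  · rintro s t hst ⟨A, hA⟩
    exact ⟨A, fun r hr => hA r (hst hr)⟩
  · rintro s t ⟨A, hA⟩ ⟨B, hB⟩
    refine ⟨max A B, fun r hr => ?_⟩
    rcases hr with hr | hr
    · exact (hA r hr).trans (le_max_left _ _)
    · exact (hB r hr).trans (le_max_right _ _)
  · intro t ht
    obtain ⟨N, hN⟩ := h t ht
    exact ⟨_, mem_nhdsWithin_of_mem_nhds hN, N, fun s hs => hs⟩

/-- The `H¹` norm of a solution is locally bounded in time. The set `F` of bad times is closed; by
Baire, if it is nonempty the `H¹` norm is bounded on a relatively open piece of `F`, and the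
conservation laws carry that bound from the nearest point of `F` to the good times nearby. -/
lemma Sol.loc_bdd {p : ℝ} {a b : ℝ → ℝ → ℝ} (h : Sol p a b) (t : ℝ) :
    ∃ N, ∀ᶠ s in 𝓝 t, Q a b s ≤ N := by
  set F : Set ℝ := {t | ∃ N, ∀ᶠ s in 𝓝 t, Q a b s ≤ N}ᶜ with hF
  have hFc : IsClosed F := by
    refine isClosed_compl_iff.2 (isOpen_iff_eventually.2 ?_)
    rintro t ⟨N, hN⟩
    filter_upwards [eventually_eventually_nhds.2 hN] with s hs using ⟨N, hs⟩
  by_contra hcon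
  have htF : t ∈ F := hcon
  have : Nonempty F := ⟨⟨t, htF⟩⟩
  have : CompleteSpace F := hFc.completeSpace_coe
  obtain ⟨n, t₀, ht₀⟩ := nonempty_interior_of_iUnion_of_closed
    (f := fun n : ℕ => {s : F | Q a b s ≤ n})
    (fun n => (h.toReg.isClosed_Q_le n).preimage continuous_subtype_val)
    (by
      refine eq_univ_of_forall fun s => mem_iUnion.2 ?_
      exact exists_nat_ge (Q a b s))
  obtain ⟨ε, ε0, hε⟩ := Metric.mem_nhds_iff.1 (mem_interior_iff_mem_nhds.1 ht₀)
  have hFN : ∀ s ∈ F, dist s t₀ < ε → Q a b s ≤ n := fun s hs hd =>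
    hε (show (⟨s, hs⟩ : F) ∈ Metric.ball t₀ ε from hd)
  refine t₀.2 ⟨max n (2 * n + 2 * (nl p n * n)), ?_⟩
  filter_upwards [Metric.ball_mem_nhds (t₀ : ℝ) (half_pos ε0)] with t ht
  rw [Metric.mem_ball] at ht
  by_cases htF : t ∈ F
  · exact (hFN t htF (by linarith)).trans (le_max_left _ _)
  obtain ⟨r, hr, hdr⟩ := hFc.exists_infDist_eq_dist ⟨t₀, t₀.2⟩ t
  have hrt : dist t r < ε / 2 := by
    rw [← hdr]; exact (Metric.infDist_le_dist_of_mem t₀.2).trans_lt ht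
  have hrN : Q a b r ≤ n := hFN r hr (by
    have := dist_triangle r t t₀
    rw [dist_comm r t] at this
    linarith)
  -- every point strictly between `t` and `r` is good, so conservation from `t` bounds the segment
  have hseg : ∀ s ∈ uIcc t r, s ≠ r → Q a b s ≤ 2 * Q a b t + 2 * (nl p (Q a b t) * Q a b t) := by
    intro s hs hsr
    obtain ⟨A, hA⟩ := bdd_of_compact (f := Q a b) (K := uIcc t s) isCompact_uIcc fun q hq => by
      by_contra hqF
      have h1 : Metric.infDist t F ≤ dist t q := Metric.infDist_le_dist_of_mem hqF
      rw [hdr, Real.dist_eq, Real.dist_eq] at h1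
      rcases le_total t r with htr | htr
      · rw [uIcc_of_le htr] at hs
        rw [uIcc_of_le hs.1] at hq
        have h2 := lt_of_le_of_ne hs.2 hsr
        rw [abs_of_nonpos (by linarith), abs_of_nonpos (by linarith [hq.1])] at h1
        linarith [hq.2]
      · rw [uIcc_of_ge htr] at hs
        rw [uIcc_of_ge hs.2] at hq
        have h2 := lt_of_le_of_ne hs.1 hsr.symm
        rw [abs_of_nonneg (by linarith), abs_of_nonneg (by linarith [hq.2])] at h1
        linarith [hq.1]
    exact h.Q_prop hA le_rfl
  refine le_trans ?_ (le_max_right _ _)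
  refine h.Q_prop (s := r) (A := max n (2 * Q a b t + 2 * (nl p (Q a b t) * Q a b t))) ?_ hrN
  intro s hs
  rw [uIcc_comm] at hs
  by_cases hsr : s = r
  · rw [hsr]; exact hrN.trans (le_max_left _ _)
  · exact (hseg s hs hsr).trans (le_max_right _ _)

/-- The `H¹` norm of a solution is bounded on compact time intervals. -/
lemma Sol.Q_bdd {p : ℝ} {a b : ℝ → ℝ → ℝ} (h : Sol p a b) (t₁ t₂ : ℝ) :
    ∃ A, ∀ t ∈ Icc t₁ t₂, Q a b t ≤ A :=
  bdd_of_compact isCompact_Icc fun t _ => h.loc_bdd t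

/-! ### The interaction Morawetz estimate -/

/-- The current `2 Im(ū uₓ)`, whose space derivative is the time derivative of `|u|²`. -/
noncomputable def cur (a b : ℝ → ℝ → ℝ) (t x : ℝ) : ℝ := 2 * (a t x * dx b t x - b t x * dx a t x)

/-- The mass of `u(t)` to the left of `x`. It is written as its value at time `t₁` plus the flux
through `x`, which makes it differentiable in `t` without differentiating under an improper
integral. -/
noncomputable def lm (a b : ℝ → ℝ → ℝ) (t₁ t x : ℝ) : ℝ :=
  (∫ s in t₁..t, cur a b s x) + ∫ y in Iic x, den a b t₁ y

/-- The momentum flux: `∂ₜ cur = ∂ₓ mflux`. -/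
noncomputable def mflux (p : ℝ) (a b : ℝ → ℝ → ℝ) (t x : ℝ) : ℝ :=
  2 * (a t x * dt b t x - b t x * dt a t x) + 2 * den (dx a) (dx b) t x
    - 4 / (p + 1) * pot p (den a b t x)

/-- The space derivative of `|u|²`. -/
noncomputable def denx (a b : ℝ → ℝ → ℝ) (t x : ℝ) : ℝ :=
  2 * (a t x * dx a t x + b t x * dx b t x)

lemma cur_cont {a b : ℝ → ℝ → ℝ} (ha : Sm a) (hb : Sm b) :
    Continuous (fun q : ℝ × ℝ => cur a b q.1 q.2) := by
  have ca := ha.cont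
  have cb := hb.cont
  have cax := ha.dx.cont
  have cbx := hb.dx.cont
  unfold cur; fun_prop

lemma denx_cont {a b : ℝ → ℝ → ℝ} (ha : Sm a) (hb : Sm b) :
    Continuous (fun q : ℝ × ℝ => denx a b q.1 q.2) := by
  have ca := ha.cont
  have cb := hb.cont
  have cax := ha.dx.cont
  have cbx := hb.dx.cont
  unfold denx; fun_prop

lemma cur_sq_le (a b : ℝ → ℝ → ℝ) (t x : ℝ) :
    cur a b t x ^ 2 + denx a b t x ^ 2 = 4 * (den a b t x * den (dx a) (dx b) t x) := by
  unfold cur denx den; ring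

lemma abs_cur_le (a b : ℝ → ℝ → ℝ) (t x : ℝ) :
    |cur a b t x| ≤ den a b t x + den (dx a) (dx b) t x := by
  unfold cur den
  rw [abs_le]; constructor
  · nlinarith [sq_nonneg (a t x + dx b t x), sq_nonneg (b t x - dx a t x)]
  · nlinarith [sq_nonneg (a t x - dx b t x), sq_nonneg (b t x + dx a t x)]

lemma abs_denx_le (a b : ℝ → ℝ → ℝ) (t x : ℝ) :
    |denx a b t x| ≤ den a b t x + den (dx a) (dx b) t x := by
  unfold denx den
  rw [abs_le]; constructor
  · nlinarith [sq_nonneg (a t x + dx a t x), sq_nonneg (b t x + dx b t x)]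
  · nlinarith [sq_nonneg (a t x - dx a t x), sq_nonneg (b t x - dx b t x)]

lemma Reg.icur {a b : ℝ → ℝ → ℝ} (h : Reg a b) (t : ℝ) : Integrable (cur a b t) :=
  (h.iQ t).mono' (cont_x (cur_cont h.sa h.sb) t).aestronglyMeasurable
    (Eventually.of_forall fun x => abs_cur_le a b t x)

/-- The momentum is at most `2 ‖u‖₂ ‖uₓ‖₂`, by Cauchy–Schwarz. -/
lemma Reg.int_cur_le {a b : ℝ → ℝ → ℝ} (h : Reg a b) (t : ℝ) :
    ∫ x, |cur a b t x| ≤ 2 * ((∫ x, den a b t x) ^ ((1:ℝ)/2) *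
      (∫ x, den (dx a) (dx b) t x) ^ ((1:ℝ)/2)) := by
  have c1 := cont_x (den_cont h.sa h.sb) t
  have c2 := cont_x (den_cont h.sa.dx h.sb.dx) t
  have s1 : ∀ x, √(den a b t x) ^ 2 = den a b t x := fun x => Real.sq_sqrt (den_nonneg _ _ _ _)
  have s2 : ∀ x, √(den (dx a) (dx b) t x) ^ 2 = den (dx a) (dx b) t x := fun x =>
    Real.sq_sqrt (den_nonneg _ _ _ _)
  have m1 : MemLp (fun x => √(den a b t x)) 2 := by
    rw [memLp_two_iff_integrable_sq c1.sqrt.aestronglyMeasurable]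
    simp only [s1]; exact h.iden t
  have m2 : MemLp (fun x => √(den (dx a) (dx b) t x)) 2 := by
    rw [memLp_two_iff_integrable_sq c2.sqrt.aestronglyMeasurable]
    simp only [s2]; exact h.idenx t
  have hcs := cauchy_schwarz m1 m2
  simp only [s1, s2] at hcs
  have hi : Integrable fun x => |√(den a b t x) * √(den (dx a) (dx b) t x)| :=
    (m1.integrable_mul m2).abs
  calc ∫ x, |cur a b t x| ≤ ∫ x, 2 * |√(den a b t x) * √(den (dx a) (dx b) t x)| := by
        refine integral_mono (h.icur t).abs (hi.const_mul 2) fun x => ?_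
        have h1 := cur_sq_le a b t x
        have h2 : (cur a b t x / 2) ^ 2 ≤ den a b t x * den (dx a) (dx b) t x := by
          nlinarith [sq_nonneg (denx a b t x)]
        have h3 := Real.abs_le_sqrt h2
        rw [abs_div, abs_two, Real.sqrt_mul (den_nonneg _ _ _ _)] at h3
        have h4 := le_abs_self (√(den a b t x) * √(den (dx a) (dx b) t x))
        show |cur a b t x| ≤ 2 * |√(den a b t x) * √(den (dx a) (dx b) t x)|
        linarith
    _ ≤ _ := by
        rw [integral_const_mul]; exact mul_le_mul_of_nonneg_left hcs (by norm_num)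

namespace Sol

variable {p : ℝ} {a b : ℝ → ℝ → ℝ}

lemma cur_hasDerivAt_x (h : Sol p a b) (t x : ℝ) :
    HasDerivAt (cur a b t) (2 * (a t x * dt a t x + b t x * dt b t x)) x := by
  have := (((h.sa.hasDerivAt_x t x).mul (h.sb.dx.hasDerivAt_x t x)).sub
    ((h.sb.hasDerivAt_x t x).mul (h.sa.dx.hasDerivAt_x t x))).const_mul 2
  refine HasDerivAt.congr_deriv this ?_
  rw [h.ea, h.eb]; ring

lemma lm_hasDerivAt_t (h : Sol p a b) (t₁ t x : ℝ) :
    HasDerivAt (fun s => lm a b t₁ s x) (cur a b t x) t :=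
  ((cont_t (cur_cont h.sa h.sb) x).integral_hasStrictDerivAt t₁ t).hasDerivAt.add_const _

lemma lm_hasDerivAt_x (h : Sol p a b) (t₁ t x : ℝ) :
    HasDerivAt (lm a b t₁ t) (den a b t x) x := by
  have ca := h.sa.cont
  have cb := h.sb.cont
  have cat := h.sa.dt.cont
  have cbt := h.sb.dt.cont
  have hc : Continuous fun q : ℝ × ℝ =>
    2 * (a q.1 q.2 * dt a q.1 q.2 + b q.1 q.2 * dt b q.1 q.2) := by fun_prop
  have h1 := hasDerivAt_param (H := cur a b)
    (Hx := fun t x => 2 * (a t x * dt a t x + b t x * dt b t x))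
    h.cur_hasDerivAt_x (cur_cont h.sa h.sb) hc t₁ t x
  have h2 := intervalIntegral.integral_eq_sub_of_hasDerivAt (a := t₁) (b := t)
    (fun s _ => den_hasDerivAt_t h.sa h.sb s x)
    ((cont_t (f := fun t x => 2 * (a t x * dt a t x + b t x * dt b t x)) hc x).intervalIntegrable
      _ _)
  rw [h2] at h1
  have hi := h.toReg.iden t₁
  have h3 : HasDerivAt (fun x => ∫ y in Iic x, den a b t₁ y) (den a b t₁ x) x := by
    have e : (fun x => ∫ y in Iic x, den a b t₁ y) =
        fun x => (∫ y in Iic (0:ℝ), den a b t₁ y) + ∫ y in (0:ℝ)..x, den a b t₁ y := by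
      funext x
      rw [← intervalIntegral.integral_Iic_sub_Iic hi.integrableOn hi.integrableOn]; ring
    rw [e]
    exact ((cont_x (den_cont h.sa h.sb) t₁).integral_hasStrictDerivAt 0 x).hasDerivAt.const_add _
  refine HasDerivAt.congr_deriv (h1.add h3) ?_
  ring

lemma lm_cont (h : Sol p a b) (t₁ : ℝ) : Continuous fun q : ℝ × ℝ => lm a b t₁ q.1 q.2 := by
  have hc : Continuous (Function.uncurry fun x s => cur a b s x) :=
    (cur_cont h.sa h.sb).comp continuous_swap
  have h1 : Continuous fun q : ℝ × ℝ => ∫ s in t₁..q.1, cur a b s q.2 :=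
    (intervalIntegral.continuous_parametric_primitive_of_continuous (μ := volume) (a₀ := t₁)
      hc).comp continuous_swap
  have h2 : Continuous fun x => ∫ y in Iic x, den a b t₁ y := by
    have : (fun x => ∫ y in Iic x, den a b t₁ y) = lm a b t₁ t₁ := by
      funext x; simp [lm]
    rw [this]
    exact continuous_iff_continuousAt.2 fun x => (h.lm_hasDerivAt_x t₁ t₁ x).continuousAt
  exact h1.add (h2.comp continuous_snd)

/-- The left mass lies between `0` and the total mass: it is nondecreasing in `x`, and the flux
term tends to `0` at `±∞` because it is integrable together with its derivative. -/
lemma lm_mem (h : Sol p a b) {t₁ t A : ℝ} (h1 : t₁ ≤ t) (hQ : ∀ s ∈ Icc t₁ t, Q a b s ≤ A)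
    (x : ℝ) : 0 ≤ lm a b t₁ t x ∧ lm a b t₁ t x ≤ ∫ y, den a b t₁ y := by
  have caxx := h.sa.dx.dx.cont
  have cbxx := h.sb.dx.dx.cont
  have ca := h.sa.cont
  have cb := h.sb.cont
  have hmono : Monotone (lm a b t₁ t) :=
    monotone_of_hasDerivAt_nonneg (h.lm_hasDerivAt_x t₁ t) fun x => den_nonneg a b t x
  obtain ⟨i1, i2, -⟩ := h.mass_flux h1 hQ
  have hd : ∀ x, HasDerivAt (fun x => ∫ s in t₁..t, 2 * (a s x * dx b s x - b s x * dx a s x))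
      (∫ s in t₁..t, 2 * (a s x * dx (dx b) s x - b s x * dx (dx a) s x)) x :=
    hasDerivAt_param (H := cur a b)
      (Hx := fun t x => 2 * (a t x * dx (dx b) t x - b t x * dx (dx a) t x))
      (fun t x => HasDerivAt.congr_deriv (h.cur_hasDerivAt_x t x) (by rw [h.ea, h.eb]; ring))
      (cur_cont h.sa h.sb) (by fun_prop) t₁ t
  have l1 : Tendsto (fun x => ∫ s in t₁..t, cur a b s x) atBot (𝓝 0) :=
    tendsto_zero_of_hasDerivAt_of_integrableOn_Iic (a := 0) (fun x _ => hd x) i2.integrableOn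
      i1.integrableOn
  have l2 : Tendsto (fun x => ∫ s in t₁..t, cur a b s x) atTop (𝓝 0) :=
    tendsto_zero_of_hasDerivAt_of_integrableOn_Ioi (a := 0) (fun x _ => hd x) i2.integrableOn
      i1.integrableOn
  constructor
  · refine le_of_tendsto l1 ?_
    filter_upwards [Iic_mem_atBot x] with y hy
    refine le_trans ?_ (hmono hy)
    exact le_add_of_nonneg_right (integral_nonneg fun _ => den_nonneg _ _ _ _)
  · have l3 := l2.add_const (∫ y, den a b t₁ y)
    rw [zero_add] at l3
    refine ge_of_tendsto l3 ?_
    filter_upwards [Ici_mem_atTop x] with y hy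
    refine (hmono hy).trans ?_
    exact add_le_add_right (setIntegral_le_integral (h.toReg.iden t₁)
      (Eventually.of_forall fun _ => den_nonneg _ _ _ _)) _

/-- The interaction Morawetz estimate, with the supremum replaced by the two endpoint values. -/
theorem morawetz (h : Sol p a b) {t₁ t₂ : ℝ} (h12 : t₁ ≤ t₂) :
    ∫ t in t₁..t₂, ∫ x, den a b t x ^ 4 ≤ 9 / 4 *
      ((∫ x, den a b t₁ x) ^ ((7:ℝ)/2) * (∫ x, den (dx a) (dx b) t₁ x) ^ ((1:ℝ)/2) +
        (∫ x, den a b t₂ x) ^ ((7:ℝ)/2) * (∫ x, den (dx a) (dx b) t₂ x) ^ ((1:ℝ)/2)) := by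
  obtain ⟨A, hQ⟩ := h.Q_bdd t₁ t₂
  obtain ⟨K, hK⟩ := ut_bound h h12 hQ
  have hA : 0 ≤ A := (Reg.mass_nonneg a b t₁).trans
    ((h.toReg.mass_le_Q t₁).trans (hQ t₁ ⟨le_rfl, h12⟩))
  have hK0 : 0 ≤ K := (Reg.mass_nonneg _ _ t₁).trans (hK t₁ ⟨le_rfl, h12⟩)
  have hn0 := nl_nonneg p hA
  have hp := h.hp
  set M := ∫ x, den a b t₁ x with hM
  have hM0 : 0 ≤ M := Reg.mass_nonneg a b t₁
  have hmass : ∀ t ∈ Icc t₁ t₂, ∫ x, den a b t x = M := fun t ht =>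
    h.mass_cons ht.1 fun s hs => hQ s ⟨hs.1, hs.2.trans ht.2⟩
  have hlm : ∀ t ∈ Icc t₁ t₂, ∀ x, 0 ≤ lm a b t₁ t x ∧ lm a b t₁ t x ≤ M := fun t ht x =>
    h.lm_mem ht.1 (fun s hs => hQ s ⟨hs.1, hs.2.trans ht.2⟩) x
  have hden : ∀ t ∈ Icc t₁ t₂, ∀ x, den a b t x ≤ A := fun t ht x =>
    (h.toReg.den_le_Q t x).trans (hQ t ht)
  have ca := h.sa.cont
  have cb := h.sb.cont
  have cax := h.sa.dx.cont
  have cbx := h.sb.dx.cont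
  have caxx := h.sa.dx.dx.cont
  have cbxx := h.sb.dx.dx.cont
  have cat := h.sa.dt.cont
  have cbt := h.sb.dt.cont
  have catx := h.sa.dt.dx.cont
  have cbtx := h.sb.dt.dx.cont
  have cd := den_cont h.sa h.sb
  have cdd := den_cont h.sa.dx h.sb.dx
  have cdx := denx_cont h.sa h.sb
  have ccur := cur_cont h.sa h.sb
  have clm := h.lm_cont t₁
  have cpot := h.pot_cont
  have cnl : Continuous (fun q : ℝ × ℝ => nl p (den a b q.1 q.2)) :=
    (nl_continuous h.hp).comp cd
  have cmf : Continuous (fun q : ℝ × ℝ => mflux p a b q.1 q.2) := by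
    unfold mflux; fun_prop
  let Gt : ℝ → ℝ → ℝ := fun t x =>
    2 * (dt a t x * dx b t x + a t x * dx (dt b) t x - (dt b t x * dx a t x
      + b t x * dx (dt a) t x)) * lm a b t₁ t x + cur a b t x * cur a b t x
  let H : ℝ → ℝ → ℝ := fun t x =>
    mflux p a b t x * lm a b t₁ t x + den a b t x * denx a b t x
  let Hx : ℝ → ℝ → ℝ := fun t x =>
    (2 * (dx a t x * dt b t x + a t x * dx (dt b) t x - (dx b t x * dt a t x
      + b t x * dx (dt a) t x)) + 4 * (dx a t x * dx (dx a) t x + dx b t x * dx (dx b) t x)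
      - 2 * nl p (den a b t x) * denx a b t x) * lm a b t₁ t x + mflux p a b t x * den a b t x
      + (denx a b t x * denx a b t x + den a b t x * (2 * (dx a t x * dx a t x
        + a t x * dx (dx a) t x + (dx b t x * dx b t x + b t x * dx (dx b) t x))))
  have hp1 : p + 1 ≠ 0 := by linarith
  have hG : ∀ t x, HasDerivAt (fun s => cur a b s x * lm a b t₁ s x) (Gt t x) t := fun t x => by
    have h1 := (((h.sa.hasDerivAt_t t x).mul (h.sb.dx.hasDerivAt_t t x)).sub
      ((h.sb.hasDerivAt_t t x).mul (h.sa.dx.hasDerivAt_t t x))).const_mul 2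
    have := h1.mul (h.lm_hasDerivAt_t t₁ t x)
    refine HasDerivAt.congr_deriv this ?_
    simp only [Gt, h.sa.comm, h.sb.comm]
    rfl
  have hH : ∀ t x, HasDerivAt (H t) (Hx t x) x := fun t x => by
    have h1 := ((((h.sa.hasDerivAt_x t x).mul (h.sb.dt.hasDerivAt_x t x)).sub
      ((h.sb.hasDerivAt_x t x).mul (h.sa.dt.hasDerivAt_x t x))).const_mul 2).add
      ((den_hasDerivAt_x h.sa.dx h.sb.dx t x).const_mul 2)
    have h2 := h1.sub
      ((pot_hasDerivAt h.hp (den_hasDerivAt_x h.sa h.sb t x)).const_mul (4 / (p + 1)))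
    have h3 := (((h.sa.hasDerivAt_x t x).mul (h.sa.dx.hasDerivAt_x t x)).add
      ((h.sb.hasDerivAt_x t x).mul (h.sb.dx.hasDerivAt_x t x))).const_mul 2
    have := (h2.mul (h.lm_hasDerivAt_x t₁ t x)).add
      ((den_hasDerivAt_x h.sa h.sb t x).mul h3)
    refine HasDerivAt.congr_deriv this ?_
    have e : 4 / (p + 1) * ((p + 1) / 2 * nl p (den a b t x) *
        (2 * (a t x * dx a t x + b t x * dx b t x))) =
        2 * nl p (den a b t x) * denx a b t x := by
      unfold denx; field_simp; ring
    show (_ - 4 / (p + 1) * ((p + 1) / 2 * nl p (den a b t x) *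
        (2 * (a t x * dx a t x + b t x * dx b t x)))) * lm a b t₁ t x
        + mflux p a b t x * den a b t x
        + (2 * (a t x * dx a t x + b t x * dx b t x) * denx a b t x + _) = _
    rw [e]
    simp only [Hx, denx]
    ring
  have hGtc : Continuous (fun q : ℝ × ℝ => Gt q.1 q.2) := by
    simp only [Gt]; fun_prop
  have hHc : Continuous (fun q : ℝ × ℝ => H q.1 q.2) := by
    simp only [H]; fun_prop
  have hHxc : Continuous (fun q : ℝ × ℝ => Hx q.1 q.2) := by
    simp only [Hx]; fun_prop
  set c := (p - 1) / (p + 1) with hc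
  have hc0 : 0 ≤ c := div_nonneg (by linarith) (by linarith)
  have hc1 : c ≤ 1 := by rw [hc, div_le_one (by linarith)]; linarith
  -- the Morawetz identity: the momentum terms cancel and the rest has a sign
  have hB : ∀ t x, Gt t x - Hx t x =
      -(2 * denx a b t x ^ 2 + 2 * c * (den a b t x * pot p (den a b t x))) := fun t x => by
    have e1 : dx (dx b) t x = dt a t x + nl p (den a b t x) * b t x := by rw [h.ea]; ring
    have e2 : dx (dx a) t x = -dt b t x + nl p (den a b t x) * a t x := by rw [h.eb]; ring
    have e3 : 4 / (p + 1) = 2 - 2 * c := by rw [hc]; field_simp; ring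
    have e4 := pot_eq h.hp (den_nonneg a b t x)
    simp only [Gt, Hx, mflux]
    rw [e1, e2, e3, e4]
    simp only [cur, denx]
    generalize hν : nl p (den a b t x) = ν
    simp only [den]
    ring
  have idt : ∀ t, Integrable (den (dt a) (dt b) t) := fun t => den_integrable (h.lat t) (h.lbt t)
  have hpot : ∀ t ∈ Icc t₁ t₂, ∀ x, pot p (den a b t x) ≤ nl p A * den a b t x := fun t ht x => by
    rw [pot_eq h.hp (den_nonneg _ _ _ _)]
    exact mul_le_mul_of_nonneg_right (nl_mono h.hp (den_nonneg _ _ _ _) (hden t ht x))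
      (den_nonneg _ _ _ _)
  have hpot0 : ∀ t x, 0 ≤ pot p (den a b t x) := fun t x => pot_nonneg p (den_nonneg _ _ _ _)
  set X := M * ((1 + 4 * nl p A) * A + K + 2 * A) + A * A with hX
  set Y := 8 * A * A + 2 * A * nl p A * A with hY
  have hX0 : 0 ≤ X := by positivity
  have hY0 : 0 ≤ Y := by positivity
  have HH := fun t (ht : t ∈ Icc t₁ t₂) => int_bound (f := H t)
    (g := fun x => M * ((1 + 4 * nl p A) * den a b t x + den (dt a) (dt b) t x
      + 2 * den (dx a) (dx b) t x) + A * (den a b t x + den (dx a) (dx b) t x)) (A := X + Y)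
    (cont_x hHc t)
    ((((((h.toReg.iden t).const_mul _).add (idt t)).add ((h.toReg.idenx t).const_mul _)).const_mul
      _).add ((h.toReg.iQ t).const_mul _))
    (fun x => by
      have h1 : |mflux p a b t x| ≤ (1 + 4 * nl p A) * den a b t x + den (dt a) (dt b) t x
          + 2 * den (dx a) (dx b) t x := by
        have k1 : 0 ≤ 4 / (p + 1) * pot p (den a b t x) :=
          mul_nonneg (div_nonneg (by norm_num) (by linarith)) (hpot0 t x)
        have k2 : 4 / (p + 1) * pot p (den a b t x) ≤ 4 * (nl p A * den a b t x) :=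
          mul_le_mul (div_le_self (by norm_num) (by linarith)) (hpot t ht x) (hpot0 t x)
            (by norm_num)
        have k3 := den_nonneg (dx a) (dx b) t x
        have k5 : 0 ≤ nl p A * den a b t x := mul_nonneg hn0 (den_nonneg _ _ _ _)
        have k4 : |2 * (a t x * dt b t x - b t x * dt a t x)| ≤
            den a b t x + den (dt a) (dt b) t x := by
          unfold den
          rw [abs_le]; constructor
          · nlinarith [sq_nonneg (a t x + dt b t x), sq_nonneg (b t x - dt a t x)]
          · nlinarith [sq_nonneg (a t x - dt b t x), sq_nonneg (b t x + dt a t x)]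
        have k4 := abs_le.1 k4
        unfold mflux
        rw [abs_le]; constructor <;> linarith
      refine (abs_add_le _ _).trans ?_
      rw [abs_mul, abs_mul, abs_of_nonneg (hlm t ht x).1, abs_of_nonneg (den_nonneg a b t x),
        mul_comm]
      refine add_le_add ?_ ?_
      · exact mul_le_mul (hlm t ht x).2 h1 (abs_nonneg _) hM0
      · exact mul_le_mul (hden t ht x) (abs_denx_le a b t x) (abs_nonneg _) hA)
    (by
      have i1 : Integrable (fun x => (1 + 4 * nl p A) * den a b t x) :=
        (h.toReg.iden t).const_mul _
      have i2 : Integrable (fun x => (1 + 4 * nl p A) * den a b t x + den (dt a) (dt b) t x) :=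
        i1.add (idt t)
      have i3 : Integrable (fun x => 2 * den (dx a) (dx b) t x) := (h.toReg.idenx t).const_mul _
      have i4 : Integrable (fun x => (1 + 4 * nl p A) * den a b t x + den (dt a) (dt b) t x
          + 2 * den (dx a) (dx b) t x) := i2.add i3
      rw [integral_add (i4.const_mul _) ((h.toReg.iQ t).const_mul _), integral_const_mul,
        integral_const_mul, integral_add i2 i3, integral_add i1 (idt t), integral_const_mul,
        integral_const_mul]
      have k1 := (h.toReg.mass_le_Q t).trans (hQ t ht)
      have k2 := (h.toReg.kin_le_Q t).trans (hQ t ht)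
      have k3 := hK t ht
      have k4 := hQ t ht
      unfold Q at k4
      have k5 : M * ((1 + 4 * nl p A) * (∫ x, den a b t x) + (∫ x, den (dt a) (dt b) t x)
          + 2 * ∫ x, den (dx a) (dx b) t x) ≤ M * ((1 + 4 * nl p A) * A + K + 2 * A) := by
        gcongr
      have k6 := mul_le_mul_of_nonneg_left k4 hA
      linarith)
  have hdx4 : ∀ t ∈ Icc t₁ t₂, ∀ x, denx a b t x ^ 2 ≤ 4 * (A * den (dx a) (dx b) t x) :=
    fun t ht x => by
      have k1 := cur_sq_le a b t x
      have k2 := mul_le_mul_of_nonneg_right (hden t ht x) (den_nonneg (dx a) (dx b) t x)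
      nlinarith [sq_nonneg (cur a b t x)]
  have hcp : ∀ t x, 0 ≤ c * (den a b t x * pot p (den a b t x)) := fun t x =>
    mul_nonneg hc0 (mul_nonneg (den_nonneg _ _ _ _) (hpot0 t x))
  have BB := fun t (ht : t ∈ Icc t₁ t₂) => int_bound (f := fun x => Gt t x - Hx t x)
    (g := fun x => 8 * A * den (dx a) (dx b) t x + 2 * A * nl p A * den a b t x) (A := X + Y)
    ((cont_x hGtc t).sub (cont_x hHxc t))
    (((h.toReg.idenx t).const_mul _).add ((h.toReg.iden t).const_mul _))
    (fun x => by
      have k1 := hdx4 t ht x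
      have k2 : den a b t x * pot p (den a b t x) ≤ A * (nl p A * den a b t x) :=
        mul_le_mul (hden t ht x) (hpot t ht x) (hpot0 t x) hA
      have k3 := mul_le_of_le_one_left (mul_nonneg (den_nonneg a b t x) (hpot0 t x)) hc1
      have k4 := hcp t x
      rw [hB, abs_neg, abs_of_nonneg (by nlinarith [sq_nonneg (denx a b t x)])]
      linarith)
    (by
      rw [integral_add ((h.toReg.idenx t).const_mul _) ((h.toReg.iden t).const_mul _),
        integral_const_mul, integral_const_mul]
      have k1 := (h.toReg.mass_le_Q t).trans (hQ t ht)
      have k2 := (h.toReg.kin_le_Q t).trans (hQ t ht)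
      have k3 : 8 * A * (∫ x, den (dx a) (dx b) t x) ≤ 8 * A * A := by gcongr
      have k4 : 2 * A * nl p A * (∫ x, den a b t x) ≤ 2 * A * nl p A * A := by gcongr
      linarith)
  have hGb : ∀ t ∈ Icc t₁ t₂, ∀ x, |cur a b t x * lm a b t₁ t x| ≤ M * |cur a b t x| :=
    fun t ht x => by
      rw [abs_mul, abs_of_nonneg (hlm t ht x).1, mul_comm]
      exact mul_le_mul_of_nonneg_right (hlm t ht x).2 (abs_nonneg _)
  have GG := fun t (ht : t ∈ Icc t₁ t₂) =>
    int_bound (f := fun x => cur a b t x * lm a b t₁ t x) (g := fun x => M * |cur a b t x|)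
    (A := M * (2 * (M ^ ((1:ℝ)/2) * (∫ x, den (dx a) (dx b) t x) ^ ((1:ℝ)/2))))
    ((cont_x ccur t).mul (cont_x clm t)) ((h.toReg.icur t).abs.const_mul M)
    (hGb t ht) (by
      rw [integral_const_mul]
      have := h.toReg.int_cur_le t
      rw [hmass t ht] at this
      exact mul_le_mul_of_nonneg_left this hM0)
  have m1 : t₁ ∈ Icc t₁ t₂ := ⟨le_rfl, h12⟩
  have m2 : t₂ ∈ Icc t₁ t₂ := ⟨h12, le_rfl⟩
  obtain ⟨-, -, hii, hfin⟩ := flux_facts hG hH hHc hGtc hHxc h12 (GG t₁ m1).1 (GG t₂ m2).1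
    (fun t ht => (HH t ht).1) (fun t ht => (HH t ht).2)
    (fun t ht => (BB t ht).1) (fun t ht => (BB t ht).2)
  -- for each time, Gagliardo–Nirenberg bounds `∫ |u|⁸` by the Morawetz bulk term
  have hGN : ∀ t ∈ Icc t₁ t₂, ∫ x, den a b t x ^ 4 ≤
      -(9 / 8 * M ^ 2) * ∫ x, (Gt t x - Hx t x) := fun t ht => by
    have hI : Integrable (fun x => denx a b t x ^ 2) :=
      (int_bound (A := _) ((cont_x cdx t).pow 2) (((h.toReg.idenx t).const_mul A).const_mul 4)
        (fun x => by rw [abs_of_nonneg (sq_nonneg _)]; exact hdx4 t ht x) le_rfl).1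
    have hL : MemLp (denx a b t) 2 :=
      (memLp_two_iff_integrable_sq (cont_x cdx t).aestronglyMeasurable).2 hI
    have k1 := gagliardo_nirenberg (den_nonneg a b t) (hden t ht)
      (den_hasDerivAt_x h.sa h.sb t) (h.toReg.iden t) hL
    rw [hmass t ht] at k1
    have k2 : 2 * ∫ x, denx a b t x ^ 2 ≤ -∫ x, (Gt t x - Hx t x) := by
      rw [← integral_const_mul, ← integral_neg]
      refine integral_mono (hI.const_mul 2) (BB t ht).1.neg fun x => ?_
      have := hcp t x
      show 2 * denx a b t x ^ 2 ≤ -(Gt t x - Hx t x)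
      rw [hB]; linarith
    have k3 := mul_le_mul_of_nonneg_left k2 (by positivity : 0 ≤ 9 / 8 * M ^ 2)
    refine k1.trans ?_
    have k4 : ∫ x, (2 * (a t x * dx a t x + b t x * dx b t x)) ^ 2 = ∫ x, denx a b t x ^ 2 := rfl
    rw [k4]; linarith
  have hint : ∫ t in t₁..t₂, ∫ x, den a b t x ^ 4 ≤
      ∫ t in t₁..t₂, -(9 / 8 * M ^ 2) * ∫ x, (Gt t x - Hx t x) := by
    rw [intervalIntegral.integral_of_le h12, intervalIntegral.integral_of_le h12]
    refine integral_mono_of_nonneg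
      (Eventually.of_forall fun t => integral_nonneg fun x => by positivity)
      (hii.const_mul _).1 ?_
    filter_upwards [ae_restrict_mem measurableSet_Ioc] with t ht
    exact hGN t (Ioc_subset_Icc_self ht)
  rw [intervalIntegral.integral_const_mul, ← hfin] at hint
  have b1 := (abs_integral_le_integral_abs (f := fun x => cur a b t₁ x * lm a b t₁ t₁ x)
    (μ := volume)).trans (GG t₁ m1).2
  have b2 := (abs_integral_le_integral_abs (f := fun x => cur a b t₂ x * lm a b t₁ t₂ x)
    (μ := volume)).trans (GG t₂ m2).2
  have b1 := (abs_le.1 b1).2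
  have b2 := (abs_le.1 b2).1
  rw [hmass t₂ m2]
  have e : M ^ ((7:ℝ)/2) = M ^ 3 * M ^ ((1:ℝ)/2) := by
    rw [← Real.rpow_natCast, ← Real.rpow_add_of_nonneg hM0 (by norm_num) (by norm_num)]
    norm_num
  rw [e]
  refine hint.trans ?_
  have k := mul_le_mul_of_nonneg_left (add_le_add b1 (neg_le_neg b2))
    (by positivity : 0 ≤ 9 / 8 * M ^ 2)
  refine le_trans (le_of_eq ?_) (k.trans (le_of_eq ?_)) <;> ring

end Sol

/-! ### From the complex equation to the real system -/

lemma memLp_of_schwartz {g : ℝ → ℝ → ℝ} {t : ℝ} (h : ∃ f : SchwartzMap ℝ ℝ, ∀ x, f x = g t x) :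
    MemLp (g t) 2 ∧ ∃ f : SchwartzMap ℝ ℝ, ∀ x, f x = dx g t x := by
  obtain ⟨f, hf⟩ := h
  have e : (f : ℝ → ℝ) = g t := funext hf
  refine ⟨e ▸ f.memLp 2, SchwartzMap.derivCLM ℝ ℝ f, fun x => ?_⟩
  rw [SchwartzMap.derivCLM_apply, e]; rfl

/-- The real and imaginary parts of a smooth, spatially Schwartz solution of the complex equation
solve the real system. -/
lemma sol_of_nls {p : ℝ} (hp : 1 < p) {u : ℝ → ℝ → ℂ}
    (hu : ContDiff ℝ (⊤ : ℕ∞) (fun q : ℝ × ℝ => u q.1 q.2))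
    (hS : ∀ t : ℝ, ∃ f : SchwartzMap ℝ ℂ, ∀ x, f x = u t x)
    (heq : ∀ (t x : ℝ), Complex.I * deriv (fun s => u s x) t - deriv (fun y => deriv (u t) y) x
      + ((‖u t x‖ ^ (p - 1) : ℝ) : ℂ) * u t x = 0) :
    Sol p (fun t x => (u t x).re) (fun t x => (u t x).im) ∧
      ∀ t x, deriv (u t) x = (dx (fun t x => (u t x).re) t x : ℂ)
        + (dx (fun t x => (u t x).im) t x : ℂ) * Complex.I := by
  set a : ℝ → ℝ → ℝ := fun t x => (u t x).re with ha
  set b : ℝ → ℝ → ℝ := fun t x => (u t x).im with hb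
  have sa : Sm a := Complex.reCLM.contDiff.comp hu
  have sb : Sm b := Complex.imCLM.contDiff.comp hu
  have hSa : ∀ t, ∃ f : SchwartzMap ℝ ℝ, ∀ x, f x = a t x := fun t => by
    obtain ⟨f, hf⟩ := hS t
    exact ⟨SchwartzMap.postcompCLM Complex.reCLM f, fun x => by simp [a, hf]⟩
  have hSb : ∀ t, ∃ f : SchwartzMap ℝ ℝ, ∀ x, f x = b t x := fun t => by
    obtain ⟨f, hf⟩ := hS t
    exact ⟨SchwartzMap.postcompCLM Complex.imCLM f, fun x => by simp [b, hf]⟩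
  have comb : ∀ {f g : ℝ → ℝ} {f' g' x : ℝ}, HasDerivAt f f' x → HasDerivAt g g' x →
      HasDerivAt (fun y => (f y : ℂ) + (g y : ℂ) * Complex.I) (f' + g' * Complex.I) x :=
    fun hf hg => hf.ofReal_comp.add (hg.ofReal_comp.mul_const _)
  have hu2 : ∀ t x, u t x = (a t x : ℂ) + (b t x : ℂ) * Complex.I := fun t x =>
    (Complex.re_add_im _).symm
  have dtu : ∀ t x, deriv (fun s => u s x) t = dt a t x + dt b t x * Complex.I := fun t x => by
    have : (fun s => u s x) = fun s => (a s x : ℂ) + (b s x : ℂ) * Complex.I :=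
      funext fun s => hu2 s x
    rw [this]
    exact (comb (sa.hasDerivAt_t t x) (sb.hasDerivAt_t t x)).deriv
  have dxu : ∀ t x, deriv (u t) x = dx a t x + dx b t x * Complex.I := fun t x => by
    have : u t = fun y => (a t y : ℂ) + (b t y : ℂ) * Complex.I := funext fun y => hu2 t y
    rw [this]
    exact (comb (sa.hasDerivAt_x t x) (sb.hasDerivAt_x t x)).deriv
  have dxxu : ∀ t x, deriv (fun y => deriv (u t) y) x
      = dx (dx a) t x + dx (dx b) t x * Complex.I := fun t x => by
    simp only [dxu]
    exact (comb (sa.dx.hasDerivAt_x t x) (sb.dx.hasDerivAt_x t x)).deriv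
  have hnl : ∀ t x, ‖u t x‖ ^ (p - 1) = nl p (den a b t x) := fun t x => by
    have e : den a b t x = ‖u t x‖ ^ 2 := by
      rw [← Complex.normSq_eq_norm_sq, Complex.normSq_apply]; simp only [den, a, b]; ring
    rw [nl, e, ← Real.rpow_natCast, ← Real.rpow_mul (norm_nonneg _)]
    congr 1; push_cast; ring
  have main : ∀ t x, (-dt b t x - dx (dx a) t x + nl p (den a b t x) * a t x = 0) ∧
      (dt a t x - dx (dx b) t x + nl p (den a b t x) * b t x = 0) := fun t x => by
    have h := heq t x
    rw [dtu, dxxu, hnl] at h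
    have hre := congrArg Complex.re h
    have him := congrArg Complex.im h
    simp at hre him
    exact ⟨by simp only [a, b] at *; linarith, by simp only [a, b] at *; linarith⟩
  refine ⟨⟨⟨sa, sb, fun t => (memLp_of_schwartz (hSa t)).1, fun t => (memLp_of_schwartz (hSb t)).1,
    fun t => (memLp_of_schwartz (memLp_of_schwartz (hSa t)).2).1,
    fun t => (memLp_of_schwartz (memLp_of_schwartz (hSb t)).2).1⟩, hp,
    fun t => (memLp_of_schwartz (memLp_of_schwartz (memLp_of_schwartz (hSa t)).2).2).1,
    fun t => (memLp_of_schwartz (memLp_of_schwartz (memLp_of_schwartz (hSb t)).2).2).1,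
    fun t x => ?_, fun t x => ?_⟩, dxu⟩
  · linarith [(main t x).2]
  · linarith [(main t x).1]

end Morawetz

/-- **Interaction Morawetz estimate in one dimension.**
If `u` is a smooth solution, Schwartz in space, of the defocusing NLS
`i∂ₜu − ∂ₓ²u + |u|^{p−1}u = 0` on `ℝ × ℝ` for some `p > 1`, then for any compact
time interval `I = [t₁,t₂]`,
`∫_I ∫_ℝ |u|⁸ ≤ C ⬝ sup_{t∈I} (‖u(t)‖_{L²}⁷ ‖∂ₓu(t)‖_{L²})`. -/
theorem interaction_morawetz_one_dimension :
    ∃ C : ℝ, 0 < C ∧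
      ∀ (p : ℝ), 1 < p →
      ∀ (u : ℝ → ℝ → ℂ),
        ContDiff ℝ (⊤ : ℕ∞) (fun q : ℝ × ℝ => u q.1 q.2) →
        (∀ t : ℝ, ∃ f : SchwartzMap ℝ ℂ, ∀ x, f x = u t x) →
        (∀ (t x : ℝ),
          Complex.I * deriv (fun s => u s x) t
            - deriv (fun y => deriv (u t) y) x
            + ((‖u t x‖ ^ (p - 1) : ℝ) : ℂ) * u t x = 0) →
      ∀ (t₁ t₂ : ℝ),
        (∫ t in Set.Icc t₁ t₂, ∫ x : ℝ, ‖u t x‖ ^ 8) ≤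
          C * ⨆ t ∈ Set.Icc t₁ t₂,
            (∫ x : ℝ, ‖u t x‖ ^ 2) ^ ((7 : ℝ) / 2) *
              (∫ x : ℝ, ‖deriv (u t) x‖ ^ 2) ^ ((1 : ℝ) / 2) := by
  refine ⟨9 / 2, by norm_num, fun p hp u hu hS heq t₁ t₂ => ?_⟩
  obtain ⟨h, hdx⟩ := Morawetz.sol_of_nls hp hu hS heq
  set a : ℝ → ℝ → ℝ := fun t x => (u t x).re with ha
  set b : ℝ → ℝ → ℝ := fun t x => (u t x).im with hb
  have e2 : ∀ t x, ‖u t x‖ ^ 2 = Morawetz.den a b t x := fun t x => by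
    rw [← Complex.normSq_eq_norm_sq, Complex.normSq_apply]; simp only [Morawetz.den, a, b]; ring
  have e8 : ∀ t x, ‖u t x‖ ^ 8 = Morawetz.den a b t x ^ 4 := fun t x => by
    rw [← e2, ← pow_mul]
  have ed : ∀ t x, ‖deriv (u t) x‖ ^ 2 = Morawetz.den (Morawetz.dx a) (Morawetz.dx b) t x :=
    fun t x => by
      rw [hdx, ← Complex.normSq_eq_norm_sq, Complex.normSq_add_mul_I]; rfl
  simp only [e2, e8, ed]
  set f : ℝ → ℝ := fun t => (∫ x, Morawetz.den a b t x) ^ ((7:ℝ)/2) *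
    (∫ x, Morawetz.den (Morawetz.dx a) (Morawetz.dx b) t x) ^ ((1:ℝ)/2) with hf
  have hf0 : ∀ t, 0 ≤ f t := fun t =>
    mul_nonneg (Real.rpow_nonneg (Morawetz.Reg.mass_nonneg _ _ _) _)
      (Real.rpow_nonneg (Morawetz.Reg.mass_nonneg _ _ _) _)
  show _ ≤ 9 / 2 * ⨆ t ∈ Set.Icc t₁ t₂, f t
  rcases lt_or_ge t₂ t₁ with h21 | h12
  · rw [Set.Icc_eq_empty (not_le.2 h21)]
    simp
  obtain ⟨A, hA⟩ := h.Q_bdd t₁ t₂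
  have hfA : ∀ t ∈ Set.Icc t₁ t₂, f t ≤ A ^ ((7:ℝ)/2) * A ^ ((1:ℝ)/2) := fun t ht => by
    have k1 := (h.toReg.mass_le_Q t).trans (hA t ht)
    have k2 := (h.toReg.kin_le_Q t).trans (hA t ht)
    have k3 := Morawetz.Reg.mass_nonneg a b t
    have k4 := Morawetz.Reg.mass_nonneg (Morawetz.dx a) (Morawetz.dx b) t
    exact mul_le_mul (Real.rpow_le_rpow k3 k1 (by norm_num)) (Real.rpow_le_rpow k4 k2 (by norm_num))
      (Real.rpow_nonneg k4 _) (Real.rpow_nonneg (k3.trans k1) _)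
  have hB : 0 ≤ A ^ ((7:ℝ)/2) * A ^ ((1:ℝ)/2) := (hf0 t₁).trans (hfA t₁ ⟨le_rfl, h12⟩)
  -- the inner supremum over an empty index set is the junk value `0`, so boundedness is checked
  -- separately for times outside the interval
  have hbdd : BddAbove (Set.range fun t => ⨆ _ : t ∈ Set.Icc t₁ t₂, f t) := by
    refine ⟨A ^ ((7:ℝ)/2) * A ^ ((1:ℝ)/2), ?_⟩
    rintro _ ⟨t, rfl⟩
    exact Real.iSup_le (fun ht => hfA t ht) hB
  have hsup : ∀ t ∈ Set.Icc t₁ t₂, f t ≤ ⨆ t ∈ Set.Icc t₁ t₂, f t := fun t ht => by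
    refine le_ciSup_of_le hbdd t ?_
    rw [ciSup_pos ht]
  have key := h.morawetz h12
  rw [integral_Icc_eq_integral_Ioc, ← intervalIntegral.integral_of_le h12]
  have s1 := hsup t₁ ⟨le_rfl, h12⟩
  have s2 := hsup t₂ ⟨h12, le_rfl⟩
  calc _ ≤ 9 / 4 * (f t₁ + f t₂) := key
    _ ≤ 9 / 2 * ⨆ t ∈ Set.Icc t₁ t₂, f t := by linarith
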